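/- arXiv:2503.08406 — 3 statements merged into one kernel-verified Lean document; each statement's English description precedes it below -/
import Mathlib

section
/- Let H ⊆ binom([n],3) be a 3-graph with matching number 2 and covering number τ(H) = 6. Then |H| ≤ 56. -/
/-- The matching number of a hypergraph: the largest size of a set of
pairwise disjoint edges. -/
noncomputable def matchingNumber (H : Finset (Finset ℕ)) : ℕ :=
  sSup {m | ∃ M : Finset (Finset ℕ), M ⊆ H ∧ M.card = m ∧
    (M : Set (Finset ℕ)).PairwiseDisjoint id}

/-- A hypergraph is `t`-resilient if deleting any set of at most `t`
vertices does not decrease its matching number. -/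
def Resilient (t : ℕ) (H : Finset (Finset ℕ)) : Prop :=
  ∀ T : Finset ℕ, T.card ≤ t →
    matchingNumber (H.filter fun F => Disjoint F T) = matchingNumber H

/-- `S 0, …, S (r-1)` form a pseudo sunflower with center `C`:
the `S i` are distinct, `C` is a proper subset of one of them, and the
sets `S i \ C` are pairwise disjoint. -/
def IsPseudoSunflower {r : ℕ} (S : Fin r → Finset ℕ) (C : Finset ℕ) : Prop :=
  Function.Injective S ∧ (∃ i, C ⊂ S i) ∧
    ∀ i j, i ≠ j → Disjoint (S i \ C) (S j \ C)

/-- The covering (transversal) number of a hypergraph. -/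
noncomputable def coverNumber (H : Finset (Finset ℕ)) : ℕ :=
  sInf {m | ∃ Y : Finset ℕ, Y.card = m ∧ ∀ F ∈ H, (F ∩ Y).Nonempty}

open Finset in
theorem star_bound (S : Finset (Finset ℕ)) (t : Finset ℕ) (u v : ℕ) (huv : u ≠ v)
    (hu : u ∉ t) (hv : v ∉ t)
    (h3 : ∀ F ∈ S, F.card = 3) (hS : ∀ F ∈ S, u ∈ F ∧ v ∈ F ∧ ∃ x ∈ t, x ∈ F) :
    S.card ≤ t.card := by
  have hsub : S ⊆ t.image (fun x => ({u, v, x} : Finset ℕ)) := by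
    intro F hF
    obtain ⟨h1, h2, x, hx, hxF⟩ := hS F hF
    rw [mem_image]
    refine ⟨x, hx, ?_⟩
    have hux : u ≠ x := by rintro rfl; exact hu hx
    have hvx : v ≠ x := by rintro rfl; exact hv hx
    apply eq_of_subset_of_card_le
    · intro y hy
      simp only [mem_insert, mem_singleton] at hy
      rcases hy with rfl | rfl | rfl <;> assumption
    · rw [h3 F hF, card_eq_three.2 ⟨u, v, x, huv, hux, hvx, rfl⟩]
  exact (card_le_card hsub).trans card_image_le

open Finset in
theorem triple_of_mem {E : Finset ℕ} (hE : E.card = 3) {k : ℕ} (hk : k ∈ E) :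
    ∃ i j, i ≠ j ∧ i ≠ k ∧ j ≠ k ∧ E = {i, j, k} := by
  have h : (E.erase k).card = 2 := by rw [card_erase_of_mem hk, hE]
  obtain ⟨i, j, hij, h⟩ := card_eq_two.1 h
  have hi : i ∈ E.erase k := by rw [h]; simp
  have hj : j ∈ E.erase k := by rw [h]; simp
  refine ⟨i, j, hij, (mem_erase.1 hi).1, (mem_erase.1 hj).1, ?_⟩
  rw [← insert_erase hk, h]
  ext x; simp; tauto

open Finset in
theorem third_of_mem {C : Finset ℕ} (hC : C.card = 3) {i p : ℕ} (hi : i ∈ C) (hp : p ∈ C)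
    (hpi : p ≠ i) : ∃ q, q ≠ i ∧ q ≠ p ∧ C = {i, p, q} := by
  have h : ((C.erase i).erase p).card = 1 := by
    rw [card_erase_of_mem (mem_erase.2 ⟨hpi, hp⟩), card_erase_of_mem hi, hC]
  obtain ⟨q, hq⟩ := card_eq_one.1 h
  have hqm : q ∈ (C.erase i).erase p := by rw [hq]; simp
  rw [mem_erase, mem_erase] at hqm
  refine ⟨q, hqm.2.1, hqm.1, ?_⟩
  rw [← insert_erase hi, ← insert_erase (mem_erase.2 ⟨hpi, hp⟩), hq]

set_option maxHeartbeats 2000000 in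
open Finset in
theorem el_claim (K : Finset (Finset ℕ)) (h3 : ∀ F ∈ K, F.card = 3)
    (hint : ∀ F ∈ K, ∀ G ∈ K, ∃ x ∈ F, x ∈ G)
    (ht : ∀ u v : ℕ, ∃ F ∈ K, u ∉ F ∧ v ∉ F)
    (E : Finset ℕ) (hE : E ∈ K) (k : ℕ) (hk : k ∈ E) :
    (K.filter fun F => F ∩ E = {k}).card + (K.filter fun F => F ∩ E = E.erase k).card ≤ 3 := by
  obtain ⟨i, j, hij, hik, hjk, rfl⟩ := triple_of_mem (h3 E hE) hk
  set E : Finset ℕ := {i, j, k} with hEd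
  set S1 := K.filter fun F => F ∩ E = {k} with hS1
  set S2 := K.filter fun F => F ∩ E = E.erase k with hS2
  have m1 : ∀ F ∈ S1, F ∈ K ∧ k ∈ F ∧ i ∉ F ∧ j ∉ F := by
    intro F hF
    rw [hS1, mem_filter] at hF
    have := hF.2
    simp only [Finset.ext_iff, mem_inter, hEd, mem_insert, mem_singleton] at this
    have a := this i; have b := this j; have c := this k
    refine ⟨hF.1, ?_, ?_, ?_⟩ <;> simp_all
  have m2 : ∀ F ∈ S2, F ∈ K ∧ k ∉ F ∧ i ∈ F ∧ j ∈ F := by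
    intro F hF
    rw [hS2, mem_filter] at hF
    have := hF.2
    simp only [Finset.ext_iff, mem_inter, mem_erase, hEd, mem_insert, mem_singleton] at this
    have a := this i; have b := this j; have c := this k
    refine ⟨hF.1, ?_, ?_, ?_⟩ <;> simp_all
  have mE : ∀ x, x ∈ E ↔ x = i ∨ x = j ∨ x = k := by intro x; simp [hEd]
  have iE : i ∈ E := by simp [hEd]
  have jE : j ∈ E := by simp [hEd]
  have kE : k ∈ E := by simp [hEd]
  -- an edge avoiding two vertices of E and so on
  have out : ∀ C ∈ K, (C \ E).card ≤ 2 := by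
    intro C hC
    obtain ⟨x, hx, hxE⟩ := hint C hC E hE
    have : C \ E ⊆ C.erase x := by
      intro y hy; rw [mem_sdiff] at hy; rw [mem_erase]
      exact ⟨by rintro rfl; exact hy.2 hxE, hy.1⟩
    have := card_le_card this
    rw [card_erase_of_mem hx, h3 C hC] at this
    exact this
  -- k-star bound
  have meet : ∀ F ∈ S1, ∀ C ∈ K, k ∉ C → ∃ x ∈ C \ E, x ∈ F := by
    intro F hF C hC hkC
    obtain ⟨hFK, a, b, c⟩ := m1 F hF
    obtain ⟨x, hx, hxC⟩ := hint F hFK C hC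
    refine ⟨x, ?_, hx⟩
    rw [mem_sdiff, mE]
    refine ⟨hxC, ?_⟩
    rintro (rfl | rfl | rfl) <;> contradiction
  have star2 : ∀ p, p ∉ E → ∀ S ⊆ S1, (∀ F ∈ S, p ∈ F) → S.card ≤ 2 := by
    intro p hp S hS hpS
    obtain ⟨C, hC, hkC, hpC⟩ := ht k p
    refine (star_bound S (C \ E) k p (by rintro rfl; exact hp kE) (by simp [kE]) (by simp [hpC])
      (fun F hF => h3 F (m1 F (hS hF)).1) ?_).trans (out C hC)
    intro F hF
    exact ⟨(m1 F (hS hF)).2.1, hpS F hF, meet F (hS hF) C hC hkC⟩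
  -- nonempty
  obtain ⟨F0, hF0, hF0i, hF0j⟩ := ht i j
  have hF0k : k ∈ F0 := by
    obtain ⟨x, hx, hxE⟩ := hint F0 hF0 E hE
    rw [mE] at hxE
    rcases hxE with rfl | rfl | rfl <;> first | contradiction | assumption
  have hF0S : F0 ∈ S1 := by
    rw [hS1, mem_filter]
    refine ⟨hF0, ?_⟩
    ext x
    rw [mem_inter, mE, mem_singleton]
    constructor
    · rintro ⟨h, rfl | rfl | rfl⟩ <;> first | contradiction | rfl
    · rintro rfl; exact ⟨hF0k, by simp⟩
  have meet2 : ∀ F ∈ S1, ∀ G ∈ S2, ∃ x ∈ F \ E, x ∈ G := by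
    intro F hF G hG
    obtain ⟨x, hx, hxF⟩ := meet F hF G (m2 G hG).1 (m2 G hG).2.1
    rw [mem_sdiff] at hx
    exact ⟨x, by rw [mem_sdiff]; exact ⟨hxF, hx.2⟩, hx.1⟩
  have s2le : S2.card ≤ 2 := by
    refine (star_bound S2 (F0 \ E) i j hij (by simp [iE]) (by simp [jE])
      (fun F hF => h3 F (m2 F hF).1) ?_).trans (out F0 hF0)
    intro G hG
    exact ⟨(m2 G hG).2.2.1, (m2 G hG).2.2.2, meet2 F0 hF0S G hG⟩
  have s2le1 : 2 ≤ S1.card → S2.card ≤ 1 := by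
    intro h
    obtain ⟨F1, hF1, hne⟩ := exists_mem_ne (by omega : 1 < S1.card) F0
    have hsd : ∀ F ∈ S1, F \ E = F.erase k := by
      intro F hF
      obtain ⟨_, a, b, c⟩ := m1 F hF
      ext x; rw [mem_sdiff, mem_erase, mE]
      constructor
      · rintro ⟨h, h'⟩; exact ⟨fun e => h' (by simp [e]), h⟩
      · rintro ⟨h, h'⟩; refine ⟨h', ?_⟩
        rintro (rfl | rfl | rfl) <;> contradiction
    have hcard : ((F0 \ E) ∩ (F1 \ E)).card ≤ 1 := by
      by_contra hc
      have c0 := out F0 hF0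
      have c1 := out F1 (m1 F1 hF1).1
      have e0 := eq_of_subset_of_card_le (inter_subset_left : (F0 \ E) ∩ (F1 \ E) ⊆ _) (by omega)
      have e1 := eq_of_subset_of_card_le (inter_subset_right : (F0 \ E) ∩ (F1 \ E) ⊆ _) (by omega)
      have e : F0 \ E = F1 \ E := e0.symm.trans e1
      rw [hsd F0 hF0S, hsd F1 hF1] at e
      apply hne
      rw [← insert_erase hF0k, ← insert_erase (m1 F1 hF1).2.1, e]
    refine (star_bound S2 ((F0 \ E) ∩ (F1 \ E)) i j hij (by simp [iE]) (by simp [jE])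
      (fun F hF => h3 F (m2 F hF).1) ?_).trans hcard
    intro G hG
    refine ⟨(m2 G hG).2.2.1, (m2 G hG).2.2.2, ?_⟩
    obtain ⟨x, hx, hxG⟩ := meet2 F0 hF0S G hG
    obtain ⟨y, hy, hyG⟩ := meet2 F1 hF1 G hG
    have hxy : x = y := by
      by_contra hxy
      have hsub : ({i, j, x, y} : Finset ℕ) ⊆ G := by
        intro z hz
        simp only [mem_insert, mem_singleton] at hz
        rcases hz with rfl | rfl | rfl | rfl
        · exact (m2 G hG).2.2.1
        · exact (m2 G hG).2.2.2
        · exact hxG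
        · exact hyG
      have := card_le_card hsub
      rw [h3 G (m2 G hG).1] at this
      rw [mem_sdiff, mE] at hx hy
      have hc : ({i, j, x, y} : Finset ℕ).card = 4 := by
        rw [card_eq_succ]
        refine ⟨i, {j, x, y}, ?_, rfl, ?_⟩
        · simp only [mem_insert, mem_singleton]; grind
        · rw [card_eq_three]; exact ⟨j, x, y, by grind, by grind, hxy, rfl⟩
      omega
    subst hxy
    exact ⟨x, by rw [mem_inter]; exact ⟨hx, hy⟩, hxG⟩
  have s2le0 : 3 ≤ S1.card → S2.card = 0 := by
    intro h
    rw [card_eq_zero]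
    by_contra hne
    obtain ⟨G, hG⟩ := nonempty_iff_ne_empty.2 hne
    obtain ⟨GK, hkG, hiG, hjG⟩ := m2 G hG
    obtain ⟨x, hx, hxG⟩ := meet2 F0 hF0S G hG
    rw [mem_sdiff] at hx
    have : S1.card ≤ 2 := by
      apply star2 x hx.2 S1 (Subset.refl _)
      intro F hF
      obtain ⟨y, hy, hyG⟩ := meet2 F hF G hG
      rw [mem_sdiff] at hy
      have hGe : ({i, j, x} : Finset ℕ) = G := by
        apply eq_of_subset_of_card_le
        · intro z hz
          simp only [mem_insert, mem_singleton] at hz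
          rcases hz with rfl | rfl | rfl <;> assumption
        · rw [h3 G GK, card_eq_three.2 ⟨i, j, x, hij, ?_, ?_, rfl⟩]
          · rintro rfl; exact hx.2 iE
          · rintro rfl; exact hx.2 jE
      rw [← hGe] at hyG
      simp only [mem_insert, mem_singleton] at hyG
      rcases hyG with rfl | rfl | rfl
      · exact absurd iE hy.2
      · exact absurd jE hy.2
      · exact hy.1
    omega
  have s1le3 : S1.card ≤ 3 := by
    obtain ⟨Ci, hCi, hCij, hCik⟩ := ht j k
    obtain ⟨Cj, hCj, hCji, hCjk⟩ := ht i k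
    have hCii : i ∈ Ci := by
      obtain ⟨x, hx, hxE⟩ := hint Ci hCi E hE
      rw [mE] at hxE
      rcases hxE with rfl | rfl | rfl <;> first | contradiction | assumption
    have hCjj : j ∈ Cj := by
      obtain ⟨x, hx, hxE⟩ := hint Cj hCj E hE
      rw [mE] at hxE
      rcases hxE with rfl | rfl | rfl <;> first | contradiction | assumption
    obtain ⟨p, hpi, hpj⟩ := hint Ci hCi Cj hCj
    have hpE : p ∉ E := by
      rw [mE]; rintro (rfl | rfl | rfl) <;> contradiction
    have hpE' := hpE
    rw [mE] at hpE'
    push Not at hpE'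
    obtain ⟨q, hqi, hqp, hqC⟩ : ∃ q, q ≠ i ∧ q ≠ p ∧ Ci = {i, p, q} := by
      exact third_of_mem (h3 Ci hCi) hCii hpi hpE'.1
    obtain ⟨r, hrj, hrp, hrC⟩ : ∃ q, q ≠ j ∧ q ≠ p ∧ Cj = {j, p, q} := by
      exact third_of_mem (h3 Cj hCj) hCjj hpj hpE'.2.1
    have hqk : q ≠ k := by rintro rfl; apply hCik; rw [hqC]; simp
    have hqj : q ≠ j := by rintro rfl; apply hCij; rw [hqC]; simp
    have hrk : r ≠ k := by rintro rfl; apply hCjk; rw [hrC]; simp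
    have hP : (S1.filter fun F => p ∈ F).card ≤ 2 :=
      star2 p hpE _ (filter_subset _ _) (fun F hF => (mem_filter.1 hF).2)
    have hq : ∀ F ∈ S1, p ∉ F → q ∈ F := by
      intro F hF hpF
      obtain ⟨_, a, b, c⟩ := m1 F hF
      obtain ⟨x, hx, hxF⟩ := meet F hF Ci hCi hCik
      rw [mem_sdiff, hqC] at hx
      simp only [mem_insert, mem_singleton] at hx
      rcases hx.1 with rfl | rfl | rfl <;> first | contradiction | assumption
    have hr : ∀ F ∈ S1, p ∉ F → r ∈ F := by
      intro F hF hpF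
      obtain ⟨_, a, b, c⟩ := m1 F hF
      obtain ⟨x, hx, hxF⟩ := meet F hF Cj hCj hCjk
      rw [mem_sdiff, hrC] at hx
      simp only [mem_insert, mem_singleton] at hx
      rcases hx.1 with rfl | rfl | rfl <;> first | contradiction | assumption
    have hN : (S1.filter fun F => ¬ p ∈ F).card ≤ 1 := by
      by_cases hqr : q = r
      · subst hqr
        obtain ⟨D, hD, hkD, hqD⟩ := ht k q
        have hc : ((D \ E).erase p).card ≤ 1 := by
          by_cases hpD : p ∈ D
          · have : p ∈ D \ E := by rw [mem_sdiff]; exact ⟨hpD, hpE⟩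
            rw [card_erase_of_mem this]
            have := out D hD
            omega
          · have hiD : i ∈ D := by
              obtain ⟨x, hx, hxF⟩ := hint D hD Ci hCi
              rw [hqC] at hxF
              simp only [mem_insert, mem_singleton] at hxF
              rcases hxF with rfl | rfl | rfl <;> first | contradiction | assumption
            have hjD : j ∈ D := by
              obtain ⟨x, hx, hxF⟩ := hint D hD Cj hCj
              rw [hrC] at hxF
              simp only [mem_insert, mem_singleton] at hxF
              rcases hxF with rfl | rfl | rfl <;> first | contradiction | assumption
            have hs : (D \ E).erase p ⊆ (D.erase i).erase j := by
              intro z hz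
              rw [mem_erase, mem_sdiff, mE] at hz
              rw [mem_erase, mem_erase]
              tauto
            have := card_le_card hs
            rw [card_erase_of_mem (mem_erase.2 ⟨hij.symm, hjD⟩), card_erase_of_mem hiD,
              h3 D hD] at this
            exact this
        refine (star_bound _ ((D \ E).erase p) k q hqk.symm (by simp [kE]) (by simp [hqD])
          (fun F hF => h3 F (m1 F (mem_filter.1 hF).1).1) ?_).trans hc
        intro F hF
        obtain ⟨hF, hpF⟩ := mem_filter.1 hF
        refine ⟨(m1 F hF).2.1, hq F hF hpF, ?_⟩
        obtain ⟨x, hx, hxF⟩ := meet F hF D hD hkD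
        exact ⟨x, mem_erase.2 ⟨by rintro rfl; exact hpF hxF, hx⟩, hxF⟩
      · refine (star_bound _ {r} k q hqk.symm (by simp [hrk.symm]) (by simp [hqr])
          (fun F hF => h3 F (m1 F (mem_filter.1 hF).1).1) ?_).trans (by simp)
        intro F hF
        obtain ⟨hF, hpF⟩ := mem_filter.1 hF
        exact ⟨(m1 F hF).2.1, hq F hF hpF, r, by simp, hr F hF hpF⟩
    have := card_filter_add_card_filter_not (s := S1) (fun F => p ∈ F)
    omega
  by_cases c3 : 3 ≤ S1.card
  · have := s2le0 c3; omega
  by_cases c2 : 2 ≤ S1.card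
  · have := s2le1 c2; omega
  omega

open Finset in
theorem el_bound (K : Finset (Finset ℕ)) (h3 : ∀ F ∈ K, F.card = 3)
    (hint : ∀ F ∈ K, ∀ G ∈ K, ∃ x ∈ F, x ∈ G)
    (ht : ∀ u v : ℕ, ∃ F ∈ K, u ∉ F ∧ v ∉ F) : K.card ≤ 10 := by
  obtain ⟨E, hE, -⟩ := ht 0 0
  have hsub : K ⊆ {E} ∪ E.biUnion (fun k => (K.filter fun F => F ∩ E = {k}) ∪
      (K.filter fun F => F ∩ E = E.erase k)) := by
    intro F hF
    by_cases hFE : F = E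
    · simp [hFE]
    rw [mem_union, mem_biUnion]
    right
    have hle : (F ∩ E).card ≤ 3 := (card_le_card inter_subset_right).trans (h3 E hE).le
    have hpos : 0 < (F ∩ E).card := by
      obtain ⟨x, hx, hx'⟩ := hint F hF E hE
      exact card_pos.2 ⟨x, mem_inter.2 ⟨hx, hx'⟩⟩
    have hne : (F ∩ E).card ≠ 3 := by
      intro h
      apply hFE
      have e1 := eq_of_subset_of_card_le (inter_subset_left : F ∩ E ⊆ F) (by rw [h3 F hF, h])
      have e2 := eq_of_subset_of_card_le (inter_subset_right : F ∩ E ⊆ E) (by rw [h3 E hE, h])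
      exact e1.symm.trans e2
    rcases (by omega : (F ∩ E).card = 1 ∨ (F ∩ E).card = 2) with h | h
    · obtain ⟨k, hk⟩ := card_eq_one.1 h
      have : k ∈ F ∩ E := by rw [hk]; simp
      exact ⟨k, (mem_inter.1 this).2, by simp [hF, hk]⟩
    · have h1 : (E \ (F ∩ E)).card = 1 := by
        rw [card_sdiff_of_subset inter_subset_right, h3 E hE, h]
      obtain ⟨k, hk⟩ := card_eq_one.1 h1
      have hkm : k ∈ E \ (F ∩ E) := by rw [hk]; simp
      refine ⟨k, (mem_sdiff.1 hkm).1, ?_⟩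
      rw [mem_union, mem_filter, mem_filter]
      right
      refine ⟨hF, ?_⟩
      rw [erase_eq, ← hk, Finset.sdiff_sdiff_eq_self inter_subset_right]
  refine (card_le_card hsub).trans ((card_union_le _ _).trans ?_)
  have := card_biUnion_le_card_mul E (fun k => (K.filter fun F => F ∩ E = {k}) ∪
      (K.filter fun F => F ∩ E = E.erase k)) 3
      (fun k hk => (card_union_le _ _).trans (el_claim K h3 hint ht E hE k hk))
  rw [h3 E hE] at this
  rw [card_singleton]
  omega

open Finset in
theorem mid_bound (H : Finset (Finset ℕ)) (h3 : ∀ F ∈ H, F.card = 3)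
    (hm : ∀ F ∈ H, ∀ G ∈ H, ∀ J ∈ H, Disjoint F G → Disjoint F J → Disjoint G J → False)
    (ht : ∀ Y : Finset ℕ, Y.card ≤ 5 → ∃ F ∈ H, Disjoint F Y)
    (A B : Finset ℕ) (hA : A ∈ H) (hB : B ∈ H) (hAB : Disjoint A B) :
    (H.filter fun F => ¬ Disjoint F A ∧ ¬ Disjoint F B).card ≤ 36 := by
  set N := H.filter fun F => ¬ Disjoint F A ∧ ¬ Disjoint F B with hN
  have hU : (A ∪ B).card = 6 := by rw [card_union_of_disjoint hAB, h3 A hA, h3 B hB]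
  have hmeet : ∀ F ∈ H, ∃ x ∈ F, x ∈ A ∪ B := by
    intro F hF
    by_contra hcon
    push Not at hcon
    apply hm F hF A hA B hB _ _ hAB
    · rw [disjoint_left]; intro x hx hx'; exact hcon x hx (mem_union_left _ hx')
    · rw [disjoint_left]; intro x hx hx'; exact hcon x hx (mem_union_right _ hx')
  have hout : ∀ F ∈ H, (F \ (A ∪ B)).card ≤ 2 := by
    intro F hF
    obtain ⟨x, hx, hxU⟩ := hmeet F hF
    have : F \ (A ∪ B) ⊆ F.erase x := by
      intro y hy; rw [mem_sdiff] at hy; rw [mem_erase]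
      exact ⟨by rintro rfl; exact hy.2 hxU, hy.1⟩
    have := card_le_card this
    rw [card_erase_of_mem hx, h3 F hF] at this
    exact this
  let S1 : ℕ × ℕ → Finset (Finset ℕ) := fun p =>
    N.filter fun F => ¬ F ⊆ A ∪ B ∧ p.1 ∈ F ∧ p.2 ∈ F
  let S2 : ℕ × ℕ → Finset (Finset ℕ) := fun p =>
    N.filter fun F => F ⊆ A ∪ B ∧ p.1 ∉ F ∧ p.2 ∉ F
  have key : ∀ p ∈ A ×ˢ B, 2 * (S1 p).card + (S2 p).card ≤ 8 := by
    rintro ⟨a, b⟩ hp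
    rw [mem_product] at hp
    obtain ⟨ha, hb⟩ : a ∈ A ∧ b ∈ B := hp
    have hab : a ≠ b := by rintro rfl; exact disjoint_left.1 hAB ha hb
    have haU : a ∈ A ∪ B := mem_union_left _ ha
    have hbU : b ∈ A ∪ B := mem_union_right _ hb
    have gen : ∀ C ∈ H, ∀ D ∈ H, Disjoint C D → a ∉ C → b ∉ C → a ∉ D → b ∉ D →
        (S1 (a, b)).card ≤ ((C ∪ D) \ (A ∪ B)).card := by
      intro C hC D hD hCD haC hbC haD hbD
      apply star_bound _ _ a b hab (by simp [ha]) (by simp [hb])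
      · intro F hF
        exact h3 F (mem_filter.1 (mem_filter.1 hF).1).1
      · intro F hF
        obtain ⟨hFN, hFU, haF, hbF⟩ := mem_filter.1 hF
        have hFH := (mem_filter.1 hFN).1
        simp only at haF hbF
        refine ⟨haF, hbF, ?_⟩
        obtain ⟨x, hxF, hxU⟩ := not_subset.1 hFU
        refine ⟨x, ?_, hxF⟩
        rw [mem_sdiff]
        refine ⟨?_, hxU⟩
        have hFe : ({a, b, x} : Finset ℕ) = F := by
          apply eq_of_subset_of_card_le
          · intro z hz
            simp only [mem_insert, mem_singleton] at hz
            rcases hz with rfl | rfl | rfl <;> assumption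
          · rw [h3 F hFH, card_eq_three.2 ⟨a, b, x, hab, ?_, ?_, rfl⟩]
            · rintro rfl; exact hxU haU
            · rintro rfl; exact hxU hbU
        by_contra hx
        rw [mem_union] at hx
        push Not at hx
        apply hm F hFH C hC D hD _ _ hCD
        · rw [← hFe, disjoint_left]; intro z hz
          simp only [mem_insert, mem_singleton] at hz
          rcases hz with rfl | rfl | rfl
          · exact haC
          · exact hbC
          · exact hx.1
        · rw [← hFe, disjoint_left]; intro z hz
          simp only [mem_insert, mem_singleton] at hz
          rcases hz with rfl | rfl | rfl
          · exact haD
          · exact hbD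
          · exact hx.2
    have hpair : ({a, b} : Finset ℕ).card = 2 := card_pair hab
    have b1 : (S1 (a, b)).card ≤ 4 := by
      obtain ⟨C, hC, hCd⟩ := ht {a, b} (by omega)
      obtain ⟨D, hD, hDd⟩ := ht ({a, b} ∪ C) (by
        have := card_union_le {a, b} C
        rw [h3 C hC] at this; omega)
      rw [disjoint_union_right] at hDd
      rw [disjoint_right] at hCd
      have hDd1 := disjoint_right.1 hDd.1
      refine (gen C hC D hD hDd.2.symm (hCd (by simp)) (hCd (by simp)) (hDd1 (by simp))
        (hDd1 (by simp))).trans ?_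
      rw [union_sdiff_distrib]
      have := hout C hC
      have := hout D hD
      have := card_union_le (C \ (A ∪ B)) (D \ (A ∪ B))
      omega
    have b2 : (S2 (a, b)).card ≤ 4 := by
      have hs : S2 (a, b) ⊆ powersetCard 3 (((A ∪ B).erase a).erase b) := by
        intro F hF
        obtain ⟨hFN, hFU, haF, hbF⟩ := mem_filter.1 hF
        simp only at haF hbF
        rw [mem_powersetCard]
        refine ⟨?_, h3 F (mem_filter.1 hFN).1⟩
        intro x hx
        rw [mem_erase, mem_erase]
        exact ⟨by rintro rfl; exact hbF hx, by rintro rfl; exact haF hx, hFU hx⟩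
      have := card_le_card hs
      rw [card_powersetCard, card_erase_of_mem (mem_erase.2 ⟨hab.symm, hbU⟩),
        card_erase_of_mem haU, hU] at this
      exact this
    have b3 : (S2 (a, b)).Nonempty → (S1 (a, b)).card ≤ 2 := by
      rintro ⟨G, hG⟩
      obtain ⟨hGN, hGU, haG, hbG⟩ := mem_filter.1 hG
      simp only at haG hbG
      have hGH := (mem_filter.1 hGN).1
      obtain ⟨D, hD, hDd⟩ := ht ({a, b} ∪ G) (by
        have := card_union_le {a, b} G
        rw [h3 G hGH] at this; omega)
      rw [disjoint_union_right] at hDd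
      have hDd1 := disjoint_right.1 hDd.1
      refine (gen G hGH D hD hDd.2.symm haG hbG (hDd1 (by simp)) (hDd1 (by simp))).trans ?_
      rw [union_sdiff_distrib, sdiff_eq_empty_iff_subset.2 hGU, empty_union]
      exact hout D hD
    rcases (S2 (a, b)).eq_empty_or_nonempty with h | h
    · rw [h, card_empty]; omega
    · have := b3 h; omega
  have hsum : ∑ p ∈ A ×ˢ B, (2 * (S1 p).card + (S2 p).card) ≤ 72 := by
    have := sum_le_card_nsmul (A ×ˢ B) _ 8 key
    rw [card_product, h3 A hA, h3 B hB] at this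
    simpa using this
  have hswap : ∑ p ∈ A ×ˢ B, (2 * (S1 p).card + (S2 p).card) =
      ∑ F ∈ N, ∑ p ∈ A ×ˢ B, (2 * (if ¬ F ⊆ A ∪ B ∧ p.1 ∈ F ∧ p.2 ∈ F then 1 else 0) +
        (if F ⊆ A ∪ B ∧ p.1 ∉ F ∧ p.2 ∉ F then 1 else 0)) := by
    rw [sum_comm]
    apply sum_congr rfl
    intro p _
    rw [sum_add_distrib, ← mul_sum, ← card_filter, ← card_filter]
  have hlow : ∀ F ∈ N, 2 ≤ ∑ p ∈ A ×ˢ B,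
      (2 * (if ¬ F ⊆ A ∪ B ∧ p.1 ∈ F ∧ p.2 ∈ F then 1 else 0) +
        (if F ⊆ A ∪ B ∧ p.1 ∉ F ∧ p.2 ∉ F then 1 else 0)) := by
    intro F hF
    obtain ⟨hFH, hFA, hFB⟩ := mem_filter.1 hF
    obtain ⟨a, haF, haA⟩ := not_disjoint_iff.1 hFA
    obtain ⟨b, hbF, hbB⟩ := not_disjoint_iff.1 hFB
    by_cases hFU : F ⊆ A ∪ B
    · have e : ∑ p ∈ A ×ˢ B,
          (2 * (if ¬ F ⊆ A ∪ B ∧ p.1 ∈ F ∧ p.2 ∈ F then 1 else 0) +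
          (if F ⊆ A ∪ B ∧ p.1 ∉ F ∧ p.2 ∉ F then 1 else 0)) =
          ((A \ F) ×ˢ (B \ F)).card := by
        have : (A \ F) ×ˢ (B \ F) = (A ×ˢ B).filter fun p => p.1 ∉ F ∧ p.2 ∉ F := by
          ext p; simp only [mem_product, mem_sdiff, mem_filter]; tauto
        rw [this, card_filter]
        apply sum_congr rfl
        intro p _
        simp [hFU]
      rw [e, card_product]
      have i1 := card_sdiff_add_card_inter A F
      have i2 := card_sdiff_add_card_inter B F
      rw [h3 A hA] at i1
      rw [h3 B hB] at i2
      have i3 : (A ∩ F).card + (B ∩ F).card = 3 := by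
        rw [← card_union_of_disjoint (hAB.mono inter_subset_left inter_subset_left),
          ← union_inter_distrib_right, inter_eq_right.2 hFU, h3 F hFH]
      have p1 : 0 < (A ∩ F).card := card_pos.2 ⟨a, mem_inter.2 ⟨haA, haF⟩⟩
      have p2 : 0 < (B ∩ F).card := card_pos.2 ⟨b, mem_inter.2 ⟨hbB, hbF⟩⟩
      rcases (by omega : ((A \ F).card = 1 ∧ (B \ F).card = 2) ∨
        ((A \ F).card = 2 ∧ (B \ F).card = 1)) with ⟨x, y⟩ | ⟨x, y⟩ <;> rw [x, y]
    · refine le_trans ?_ (single_le_sum (fun _ _ => Nat.zero_le _)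
        (mem_product.2 ⟨haA, hbB⟩ : (a, b) ∈ A ×ˢ B))
      simp [hFU, haF, hbF]
  have := card_nsmul_le_sum N _ 2 hlow
  rw [← hswap, smul_eq_mul] at this
  omega

open Finset in
theorem avoid_bound (H : Finset (Finset ℕ)) (h3 : ∀ F ∈ H, F.card = 3)
    (hm : ∀ F ∈ H, ∀ G ∈ H, ∀ J ∈ H, Disjoint F G → Disjoint F J → Disjoint G J → False)
    (ht : ∀ Y : Finset ℕ, Y.card ≤ 5 → ∃ F ∈ H, Disjoint F Y)
    (A : Finset ℕ) (hA : A ∈ H) :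
    (H.filter fun F => Disjoint F A).card ≤ 10 := by
  apply el_bound
  · intro F hF; exact h3 F (mem_filter.1 hF).1
  · intro F hF G hG
    rw [mem_filter] at hF hG
    by_contra hcon
    push Not at hcon
    exact hm F hF.1 G hG.1 A hA (disjoint_left.2 hcon) hF.2 hG.2
  · intro u v
    obtain ⟨F, hF, hd⟩ := ht (A ∪ {u, v}) (by
      have := card_union_le A {u, v}
      have := card_le_two (a := u) (b := v)
      rw [h3 A hA] at *
      omega)
    rw [disjoint_union_right] at hd
    have := disjoint_right.1 hd.2
    exact ⟨F, mem_filter.2 ⟨hF, hd.1⟩, this (by simp), this (by simp)⟩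

/-- A 3-graph with matching number 2 and covering number 6 has at
most 56 edges. -/
theorem stmt12 (n : ℕ) (H : Finset (Finset ℕ))
    (hH : H ⊆ (Finset.range n).powersetCard 3)
    (hν : matchingNumber H = 2) (hτ : coverNumber H = 6) :
    H.card ≤ 56 := by
  have h3 : ∀ F ∈ H, F.card = 3 := fun F hF => (Finset.mem_powersetCard.1 (hH hF)).2
  have hbdd : BddAbove {m | ∃ M : Finset (Finset ℕ), M ⊆ H ∧ M.card = m ∧
      (M : Set (Finset ℕ)).PairwiseDisjoint id} := by
    refine ⟨H.card, ?_⟩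
    rintro m ⟨M, hM, rfl, -⟩
    exact Finset.card_le_card hM
  have hm : ∀ F ∈ H, ∀ G ∈ H, ∀ J ∈ H,
      Disjoint F G → Disjoint F J → Disjoint G J → False := by
    intro F hF G hG J hJ h1 h2 h4
    have hne : ∀ X ∈ H, ∀ Y ∈ H, Disjoint X Y → X ≠ Y := by
      rintro X hX Y hY hd rfl
      rw [disjoint_self] at hd
      have := h3 X hX
      rw [hd] at this
      simp at this
    have hle : 3 ≤ matchingNumber H := by
      apply le_csSup hbdd
      refine ⟨{F, G, J}, ?_, ?_, ?_⟩
      · intro z hz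
        simp only [Finset.mem_insert, Finset.mem_singleton] at hz
        rcases hz with rfl | rfl | rfl <;> assumption
      · exact Finset.card_eq_three.2
          ⟨F, G, J, hne F hF G hG h1, hne F hF J hJ h2, hne G hG J hJ h4, rfl⟩
      · intro x hx y hy hxy
        simp only [Finset.coe_insert, Finset.coe_singleton, Set.mem_insert_iff,
          Set.mem_singleton_iff] at hx hy
        simp only [Function.onFun, id]
        rcases hx with rfl | rfl | rfl <;> rcases hy with rfl | rfl | rfl <;>
          first | exact absurd rfl hxy | assumption | (apply Disjoint.symm; assumption)
    omega
  have ht : ∀ Y : Finset ℕ, Y.card ≤ 5 → ∃ F ∈ H, Disjoint F Y := by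
    intro Y hY
    by_contra hcon
    push Not at hcon
    have : coverNumber H ≤ Y.card := by
      apply Nat.sInf_le
      refine ⟨Y, rfl, fun F hF => ?_⟩
      exact Finset.not_disjoint_iff_nonempty_inter.1 (hcon F hF)
    omega
  obtain ⟨A, hA, -⟩ := ht ∅ (by simp)
  obtain ⟨B, hB, hBA⟩ := ht A (by rw [h3 A hA]; omega)
  have k1 := avoid_bound H h3 hm ht A hA
  have k2 := avoid_bound H h3 hm ht B hB
  have k3 := mid_bound H h3 hm ht A B hA hB hBA.symm
  have hsub : H ⊆ (H.filter fun F => Disjoint F A) ∪ ((H.filter fun F => Disjoint F B) ∪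
      (H.filter fun F => ¬ Disjoint F A ∧ ¬ Disjoint F B)) := by
    intro F hF
    simp only [Finset.mem_union, Finset.mem_filter]
    tauto
  have c1 := Finset.card_le_card hsub
  have c2 := Finset.card_union_le (H.filter fun F => Disjoint F A)
    ((H.filter fun F => Disjoint F B) ∪ (H.filter fun F => ¬ Disjoint F A ∧ ¬ Disjoint F B))
  have c3 := Finset.card_union_le (H.filter fun F => Disjoint F B)
    (H.filter fun F => ¬ Disjoint F A ∧ ¬ Disjoint F B)
  omega
end

section
/- Let H ⊆ binom([n],3) be a 2-resilient 3-graph with matching number s ≥ 3. Then |H| ≤ (73/6)·s³ + 50. Moreover, for s ≥ 21, |H| ≤ (73/6)·s³. -/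
structure Setup (H : Finset (Finset ℕ)) (s : ℕ) (v : ℕ → Fin 3 → ℕ) : Prop where
  hs : 3 ≤ s
  card3 : ∀ F ∈ H, F.card = 3
  pd : ∀ x y, x ≠ y → (H.filter (fun F => x ∈ F ∧ y ∈ F)).card ≤ 3 * s
  vd : ∀ x, (H.filter (fun F => x ∈ F)).card ≤ 9 * s ^ 2
  inj : ∀ i < s, ∀ j < s, ∀ k l, v i k = v j l → i = j ∧ k = l
  aug : ∀ I ⊆ Finset.range s, ∀ N ⊆ H, (N : Set (Finset ℕ)).PairwiseDisjoint id →
    I.card < N.card → (∀ F ∈ N, ∀ j < s, j ∉ I → ∀ k, v j k ∉ F) → False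

theorem mn_bdd (H : Finset (Finset ℕ)) : BddAbove {m | ∃ M : Finset (Finset ℕ), M ⊆ H ∧ M.card = m ∧
    (M : Set (Finset ℕ)).PairwiseDisjoint id} := by
  refine ⟨H.card, ?_⟩
  rintro m ⟨M, hM, rfl, -⟩
  exact Finset.card_le_card hM

theorem mn_le (H M : Finset (Finset ℕ)) (hM : M ⊆ H)
    (hd : (M : Set (Finset ℕ)).PairwiseDisjoint id) : M.card ≤ matchingNumber H :=
  le_csSup (mn_bdd H) ⟨M, hM, rfl, hd⟩

theorem mn_ex (H : Finset (Finset ℕ)) : ∃ M : Finset (Finset ℕ), M ⊆ H ∧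
    M.card = matchingNumber H ∧ (M : Set (Finset ℕ)).PairwiseDisjoint id :=
  Nat.sSup_mem (s := {m | ∃ M : Finset (Finset ℕ), M ⊆ H ∧ M.card = m ∧
    (M : Set (Finset ℕ)).PairwiseDisjoint id}) ⟨0, ∅, by simp⟩ (mn_bdd H)

theorem setup_ex (s : ℕ) (hs : 3 ≤ s) (H : Finset (Finset ℕ))
    (card3 : ∀ F ∈ H, F.card = 3)
    (hres : Resilient 2 H) (hν : matchingNumber H = s) : ∃ v, Setup H s v := by
  have hmax : ∀ M ⊆ H, (M : Set (Finset ℕ)).PairwiseDisjoint id → M.card ≤ s := by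
    intro M h1 h2
    rw [← hν]; exact mn_le H M h1 h2
  have hav : ∀ T : Finset ℕ, T.card ≤ 2 → ∃ M ⊆ H, (M : Set (Finset ℕ)).PairwiseDisjoint id ∧
      M.card = s ∧ ∀ F ∈ M, Disjoint F T := by
    intro T hT
    obtain ⟨M, h1, h2, h3⟩ := mn_ex (H.filter fun F => Disjoint F T)
    rw [hres T hT, hν] at h2
    refine ⟨M, fun F hF => (Finset.mem_filter.1 (h1 hF)).1, h3, h2, fun F hF => (Finset.mem_filter.1 (h1 hF)).2⟩
  have hVc : ∀ M ⊆ H, M.card = s → (M.biUnion id).card ≤ 3 * s := by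
    intro M h1 h2
    rw [← h2, mul_comm]
    exact Finset.card_biUnion_le_card_mul _ _ _ (fun F hF => (card3 F (h1 hF)).le)
  have hmeet : ∀ M ⊆ H, (M : Set (Finset ℕ)).PairwiseDisjoint id → M.card = s → ∀ F ∈ H,
      ∃ z ∈ M.biUnion id, z ∈ F := by
    intro M h1 h2 h3 F hF
    by_contra hcon
    push Not at hcon
    have hdis : ∀ G ∈ M, Disjoint F G := by
      intro G hG
      rw [Finset.disjoint_left]
      intro x hx hx'
      exact hcon x (Finset.mem_biUnion.2 ⟨G, hG, hx'⟩) hx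
    have hFM : F ∉ M := by
      intro h
      have := hdis F h
      rw [disjoint_self] at this
      have h3 := card3 F hF
      rw [this] at h3
      simp at h3
    have := hmax (insert F M) (Finset.insert_subset hF h1) (by
      rw [Finset.coe_insert, Set.pairwiseDisjoint_insert]
      exact ⟨h2, fun G hG _ => hdis G hG⟩)
    rw [Finset.card_insert_of_notMem hFM] at this
    omega
  have pd : ∀ x y, x ≠ y → (H.filter (fun F => x ∈ F ∧ y ∈ F)).card ≤ 3 * s := by
    intro x y hxy
    obtain ⟨M, h1, h2, h3, h4⟩ := hav {x, y} Finset.card_le_two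
    refine le_trans ?_ (hVc M h1 h3)
    refine le_trans (Finset.card_le_card (t := (M.biUnion id).image (fun z => ({x, y, z} : Finset ℕ))) ?_)
      Finset.card_image_le
    intro F hF
    rw [Finset.mem_filter] at hF
    obtain ⟨hF, hx, hy⟩ := hF
    obtain ⟨z, hz, hzF⟩ := hmeet M h1 h2 h3 F hF
    rw [Finset.mem_image]
    refine ⟨z, hz, ?_⟩
    obtain ⟨G, hG, hzG⟩ := Finset.mem_biUnion.1 hz
    have := Finset.disjoint_left.1 (h4 G hG) hzG
    simp only [Finset.mem_insert, Finset.mem_singleton, not_or] at this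
    apply Finset.eq_of_subset_of_card_le
    · intro t ht; simp at ht; rcases ht with rfl | rfl | rfl <;> assumption
    · rw [card3 F hF, Finset.card_eq_three.2 ⟨x, y, z, hxy, Ne.symm this.1, Ne.symm this.2, rfl⟩]
  have vd : ∀ x, (H.filter (fun F => x ∈ F)).card ≤ 9 * s ^ 2 := by
    intro x
    obtain ⟨M, h1, h2, h3, h4⟩ := hav {x} (by simp)
    have h5 : H.filter (fun F => x ∈ F) ⊆ (M.biUnion id).biUnion
        (fun y => if x ≠ y then H.filter (fun F => x ∈ F ∧ y ∈ F) else ∅) := by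
      intro F hF
      rw [Finset.mem_filter] at hF
      obtain ⟨z, hz, hzF⟩ := hmeet M h1 h2 h3 F hF.1
      rw [Finset.mem_biUnion]
      refine ⟨z, hz, ?_⟩
      obtain ⟨G, hG, hzG⟩ := Finset.mem_biUnion.1 hz
      have := Finset.disjoint_left.1 (h4 G hG) hzG
      rw [Finset.mem_singleton] at this
      rw [if_pos (Ne.symm this)]
      simp [hF, hzF]
    refine le_trans (Finset.card_le_card h5) ?_
    refine le_trans (Finset.card_biUnion_le_card_mul _ _ (3 * s) ?_) ?_
    · intro y hy
      split_ifs with h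
      · exact pd x y h
      · simp
    · have := hVc M h1 h3
      nlinarith
  obtain ⟨M, h1, h2, h3, -⟩ := hav ∅ (by simp)
  have hE : ∃ e : ℕ → Finset ℕ, (∀ i < s, e i ∈ M) ∧ ∀ i < s, ∀ j < s, e i = e j → i = j := by
    let f := (M.equivFinOfCardEq h3).symm
    refine ⟨fun i => if h : i < s then f ⟨i, h⟩ else ∅, ?_, ?_⟩
    · intro i hi; simp [hi]
    · intro i hi j hj hij
      simp only [hi, hj, dif_pos] at hij
      have := f.injective (Subtype.ext hij)
      simpa using this
  obtain ⟨e, he, hei⟩ := hE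
  have hV : ∀ i, ∃ w : Fin 3 → ℕ, i < s → Function.Injective w ∧ ∀ x, x ∈ e i ↔ ∃ k, w k = x := by
    intro i
    by_cases hi : i < s
    · let f := ((e i).equivFinOfCardEq (card3 _ (h1 (he i hi)))).symm
      refine ⟨fun k => f k, fun _ => ⟨fun a b hab => f.injective (Subtype.ext hab), fun x => ⟨fun hx => ⟨f.symm ⟨x, hx⟩, by simp⟩, ?_⟩⟩⟩
      rintro ⟨k, rfl⟩
      exact (f k).2
    · exact ⟨fun _ => 0, fun h => absurd h hi⟩
  choose v hv using hV
  have hdisj : ∀ i < s, ∀ j < s, i ≠ j → Disjoint (e i) (e j) := by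
    intro i hi j hj hij
    exact h2 (he i hi) (he j hj) (fun h => hij (hei i hi j hj h))
  refine ⟨v, hs, card3, pd, vd, ?_, ?_⟩
  · intro i hi j hj k l hkl
    by_cases hij : i = j
    · subst hij
      exact ⟨rfl, (hv i hi).1 hkl⟩
    · exfalso
      refine Finset.disjoint_left.1 (hdisj i hi j hj hij) (((hv i hi).2 _).2 ⟨k, rfl⟩) ?_
      exact ((hv j hj).2 _).2 ⟨l, hkl.symm⟩
  · intro I hI N hN hNd hc hF
    have hFd : ∀ F ∈ N, ∀ j < s, j ∉ I → Disjoint F (e j) := by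
      intro F hFN j hj hjI
      rw [Finset.disjoint_left]
      intro x hx hx'
      obtain ⟨k, rfl⟩ := ((hv j hj).2 x).1 hx'
      exact hF F hFN j hj hjI k hx
    have hdis : Disjoint N ((Finset.range s \ I).image e) := by
      rw [Finset.disjoint_left]
      intro F hFN hF2
      obtain ⟨j, hj, rfl⟩ := Finset.mem_image.1 hF2
      rw [Finset.mem_sdiff, Finset.mem_range] at hj
      have := hFd _ hFN j hj.1 hj.2
      rw [disjoint_self] at this
      have h3 := card3 _ (hN hFN)
      rw [this] at h3
      simp at h3
    have hci : ((Finset.range s \ I).image e).card = s - I.card := by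
      rw [Finset.card_image_of_injOn, Finset.card_sdiff_of_subset hI, Finset.card_range]
      intro a ha b hb hab
      simp at ha hb
      exact hei a ha.1 b hb.1 hab
    have hIs : I.card ≤ s := by simpa using Finset.card_le_card hI
    have := hmax (N ∪ (Finset.range s \ I).image e) (by
      apply Finset.union_subset hN
      intro F hF2
      obtain ⟨j, hj, rfl⟩ := Finset.mem_image.1 hF2
      rw [Finset.mem_sdiff, Finset.mem_range] at hj
      exact h1 (he j hj.1)) (by
      rw [Finset.coe_union, Set.pairwiseDisjoint_union]
      refine ⟨hNd, ?_, ?_⟩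
      · intro A hA B hB hAB
        simp only [Finset.coe_image, Set.mem_image, Finset.mem_coe, Finset.mem_sdiff, Finset.mem_range] at hA hB
        obtain ⟨i, hi, rfl⟩ := hA
        obtain ⟨j, hj, rfl⟩ := hB
        exact hdisj i hi.1 j hj.1 (fun h => hAB (by rw [h]))
      · intro A hA B hB hAB
        simp only [Finset.coe_image, Set.mem_image, Finset.mem_coe, Finset.mem_sdiff, Finset.mem_range] at hA hB
        obtain ⟨j, hj, rfl⟩ := hB
        exact hFd A hA j hj.1 hj.2)
    rw [Finset.card_union_of_disjoint hdis, hci] at this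
    omega

theorem avoid_ex (g : Finset (Finset ℕ)) (D : ℕ) (T : Finset ℕ)
    (hD : ∀ y ∈ T, (g.filter (fun F => y ∈ F)).card ≤ D) (hg : T.card * D < g.card) :
    ∃ F ∈ g, Disjoint F T := by
  by_contra hcon
  push Not at hcon
  have : g ⊆ T.biUnion (fun y => g.filter (fun F => y ∈ F)) := by
    intro F hF
    obtain ⟨y, hy, hy'⟩ := Finset.not_disjoint_iff.1 (hcon F hF)
    rw [Finset.mem_biUnion]
    exact ⟨y, hy', by simp [hF, hy]⟩
  have h2 := Finset.card_le_card this
  have h3 := Finset.card_biUnion_le_card_mul T _ D hD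
  omega

theorem link2 (g : Finset (Finset ℕ)) (D : ℕ) (h3 : 3 ≤ D) (hc : ∀ F ∈ g, F.card = 2)
    (hD : ∀ y, (g.filter (fun F => y ∈ F)).card ≤ D) (hg : D < g.card) :
    ∃ A ∈ g, ∃ B ∈ g, Disjoint A B := by
  by_contra hcon
  push Not at hcon
  have hmt : ∀ A ∈ g, ∀ B ∈ g, ∃ x, x ∈ A ∧ x ∈ B := by
    intro A hA B hB
    exact Finset.not_disjoint_iff.1 (hcon A hA B hB)
  have hne : g.Nonempty := Finset.card_pos.1 (by omega)
  obtain ⟨F0, hF0⟩ := hne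
  obtain ⟨u, w, huw, rfl⟩ := Finset.card_eq_two.1 (hc F0 hF0)
  obtain ⟨F1, hF1, hd1⟩ := avoid_ex g D {u} (fun y _ => hD y) (by simpa using hg)
  obtain ⟨F2, hF2, hd2⟩ := avoid_ex g D {w} (fun y _ => hD y) (by simpa using hg)
  rw [Finset.disjoint_singleton_right] at hd1 hd2
  have hw1 : w ∈ F1 := by
    obtain ⟨x, hx, hx'⟩ := hmt _ hF0 _ hF1
    simp at hx
    rcases hx with rfl | rfl
    · exact absurd hx' hd1
    · exact hx'
  have hu2 : u ∈ F2 := by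
    obtain ⟨x, hx, hx'⟩ := hmt _ hF0 _ hF2
    simp at hx
    rcases hx with rfl | rfl
    · exact hx'
    · exact absurd hx' hd2
  obtain ⟨z, hz1, hz2⟩ := hmt _ hF1 _ hF2
  have hzu : z ≠ u := fun h => hd1 (h ▸ hz1)
  have hzw : z ≠ w := fun h => hd2 (h ▸ hz2)
  have e1 : F1 = {w, z} := by
    symm; apply Finset.eq_of_subset_of_card_le
    · intro t ht; simp at ht; rcases ht with rfl | rfl <;> assumption
    · rw [hc F1 hF1, Finset.card_pair hzw.symm]
  have e2 : F2 = {u, z} := by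
    symm; apply Finset.eq_of_subset_of_card_le
    · intro t ht; simp at ht; rcases ht with rfl | rfl <;> assumption
    · rw [hc F2 hF2, Finset.card_pair hzu.symm]
  subst e1 e2
  have hsub : g ⊆ {{u, w}, {w, z}, {u, z}} := by
    intro F hF
    have key : ∀ a b, a ≠ b → a ∈ F → b ∈ F → F = {a, b} := by
      intro a b hab ha hb
      symm; apply Finset.eq_of_subset_of_card_le
      · intro t ht; simp at ht; rcases ht with rfl | rfl <;> assumption
      · rw [hc F hF, Finset.card_pair hab]
    obtain ⟨x, hx, hx'⟩ := hmt _ hF0 _ hF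
    obtain ⟨y, hy, hy'⟩ := hmt _ hF1 _ hF
    obtain ⟨t, ht, ht'⟩ := hmt _ hF2 _ hF
    simp only [Finset.mem_insert, Finset.mem_singleton] at hx hy ht ⊢
    have k1 := key u w huw
    have k2 := key w z hzw.symm
    have k3 := key u z hzu.symm
    rcases hx with rfl | rfl <;> rcases hy with rfl | rfl <;> rcases ht with rfl | rfl <;> tauto
  have := Finset.card_le_card hsub
  have := Finset.card_le_three (a := ({u, w} : Finset ℕ)) (b := {w, z}) (c := {u, z})
  omega

theorem cross4 (g : Finset (Finset ℕ)) (A B : Finset ℕ) (hA : A.card = 2) (hB : B.card = 2)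
    (hAB : Disjoint A B) (hc : ∀ F ∈ g, F.card = 2) (h1 : ∀ F ∈ g, ¬ Disjoint F A)
    (h2 : ∀ F ∈ g, ¬ Disjoint F B) : g.card ≤ 4 := by
  have hsub : g ⊆ (A ×ˢ B).image (fun p => {p.1, p.2}) := by
    intro F hF
    obtain ⟨x, hx, hxA⟩ := Finset.not_disjoint_iff.1 (h1 F hF)
    obtain ⟨y, hy, hyB⟩ := Finset.not_disjoint_iff.1 (h2 F hF)
    rw [Finset.mem_image]
    refine ⟨(x, y), by simp [hxA, hyB], ?_⟩
    have hxy : x ≠ y := by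
      rintro rfl
      exact Finset.disjoint_left.1 hAB hxA hyB
    apply Finset.eq_of_subset_of_card_le
    · intro t ht; simp at ht; rcases ht with rfl | rfl <;> assumption
    · rw [hc F hF, Finset.card_pair hxy]
  refine le_trans (Finset.card_le_card hsub) (le_trans Finset.card_image_le ?_)
  rw [Finset.card_product, hA, hB]

def Out (s : ℕ) (v : ℕ → Fin 3 → ℕ) (x : ℕ) : Prop := ∀ i < s, ∀ k, v i k ≠ x

open Classical in
noncomputable def LK (H : Finset (Finset ℕ)) (s : ℕ) (v : ℕ → Fin 3 → ℕ) (i : ℕ) (k : Fin 3) :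
    Finset (Finset ℕ) :=
  ((H.biUnion id).powersetCard 2).filter
    (fun P => (∀ x ∈ P, Out s v x) ∧ insert (v i k) P ∈ H)

open Classical in
noncomputable def WK (H : Finset (Finset ℕ)) (s : ℕ) (v : ℕ → Fin 3 → ℕ) (i : ℕ) (k : Fin 3)
    (j : ℕ) (l : Fin 3) : Finset ℕ :=
  (H.biUnion id).filter (fun w => Out s v w ∧ {v i k, v j l, w} ∈ H)

theorem WK_symm (H : Finset (Finset ℕ)) (s : ℕ) (v : ℕ → Fin 3 → ℕ) (i : ℕ) (k : Fin 3)
    (j : ℕ) (l : Fin 3) : WK H s v i k j l = WK H s v j l i k := by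
  unfold WK
  congr 1
  ext w
  rw [Finset.insert_comm]

theorem mem_LK {H : Finset (Finset ℕ)} {s : ℕ} {v : ℕ → Fin 3 → ℕ} {i : ℕ} {k : Fin 3}
    {P : Finset ℕ} (h : P ∈ LK H s v i k) : P.card = 2 ∧ (∀ x ∈ P, Out s v x) ∧
      insert (v i k) P ∈ H := by
  classical
  unfold LK at h
  rw [Finset.mem_filter, Finset.mem_powersetCard] at h
  exact ⟨h.1.2, h.2⟩

theorem LK_mem {H : Finset (Finset ℕ)} {s : ℕ} {v : ℕ → Fin 3 → ℕ} {i : ℕ} {k : Fin 3}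
    {P : Finset ℕ} (h : P.card = 2 ∧ (∀ x ∈ P, Out s v x) ∧
      insert (v i k) P ∈ H) : P ∈ LK H s v i k := by
  classical
  unfold LK
  rw [Finset.mem_filter, Finset.mem_powersetCard]
  refine ⟨⟨?_, h.1⟩, h.2⟩
  intro x hx
  exact Finset.mem_biUnion.2 ⟨_, h.2.2, Finset.mem_insert_of_mem hx⟩

theorem mem_WK {H : Finset (Finset ℕ)} {s : ℕ} {v : ℕ → Fin 3 → ℕ} {i : ℕ} {k : Fin 3}
    {j : ℕ} {l : Fin 3} {w : ℕ} : w ∈ WK H s v i k j l ↔ Out s v w ∧ {v i k, v j l, w} ∈ H := by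
  classical
  unfold WK
  rw [Finset.mem_filter]
  refine ⟨fun h => h.2, fun h => ⟨Finset.mem_biUnion.2 ⟨_, h.2, by simp⟩, h⟩⟩

variable {H : Finset (Finset ℕ)} {s : ℕ} {v : ℕ → Fin 3 → ℕ}

theorem Setup.LK_deg (S : Setup H s v) {i : ℕ} (hi : i < s) (k : Fin 3) (y : ℕ) :
    ((LK H s v i k).filter (fun F => y ∈ F)).card ≤ 3 * s := by
  by_cases hy : v i k = y
  · have : (LK H s v i k).filter (fun F => y ∈ F) = ∅ := by
      rw [Finset.filter_eq_empty_iff]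
      intro P hP hyP
      exact (mem_LK hP).2.1 y hyP i hi k hy
    rw [this]; simp
  · refine le_trans ?_ (S.pd (v i k) y hy)
    refine Finset.card_le_card_of_injOn (fun P => insert (v i k) P) ?_ ?_
    · intro P hP
      simp only [Finset.coe_filter, Set.mem_ofPred_eq] at hP ⊢
      exact ⟨(mem_LK hP.1).2.2, by simp, by simp [hP.2]⟩
    · intro P hP Q hQ hPQ
      simp only [Finset.coe_filter, Set.mem_ofPred_eq] at hP hQ hPQ
      have h1 : v i k ∉ P := fun h => (mem_LK hP.1).2.1 _ h i hi k rfl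
      have h2 : v i k ∉ Q := fun h => (mem_LK hQ.1).2.1 _ h i hi k rfl
      rw [← Finset.erase_insert h1, ← Finset.erase_insert h2, hPQ]

theorem ne_of_disj {A B : Finset ℕ} (hA : A.card = 3) (h : Disjoint A B) : A ≠ B := by
  rintro rfl
  rw [disjoint_self] at h
  rw [h] at hA
  simp at hA

theorem Setup.aug2 (S : Setup H s v) {i : ℕ} (hi : i < s) {A B : Finset ℕ} (hA : A ∈ H) (hB : B ∈ H)
    (hAB : Disjoint A B) (h1 : ∀ j < s, j ≠ i → ∀ k, v j k ∉ A)
    (h2 : ∀ j < s, j ≠ i → ∀ k, v j k ∉ B) : False := by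
  refine S.aug {i} (by simpa using hi) {A, B} ?_ ?_ ?_ ?_
  · intro F hF; simp at hF; rcases hF with rfl | rfl <;> assumption
  · intro F hF G hG hFG
    simp at hF hG
    rcases hF with rfl | rfl <;> rcases hG with rfl | rfl
    · exact absurd rfl hFG
    · exact hAB
    · exact hAB.symm
    · exact absurd rfl hFG
  · rw [Finset.card_pair (ne_of_disj (S.card3 A hA) hAB)]; simp
  · intro F hF j hj hji
    simp at hF hji
    rcases hF with rfl | rfl
    · exact h1 j hj hji
    · exact h2 j hj hji

theorem Setup.aug3 (S : Setup H s v) {i j : ℕ} (hi : i < s) (hj : j < s) (hij : i ≠ j)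
    {A B C : Finset ℕ} (hA : A ∈ H) (hB : B ∈ H) (hC : C ∈ H)
    (hAB : Disjoint A B) (hAC : Disjoint A C) (hBC : Disjoint B C)
    (h1 : ∀ m < s, m ≠ i → m ≠ j → ∀ k, v m k ∉ A)
    (h2 : ∀ m < s, m ≠ i → m ≠ j → ∀ k, v m k ∉ B)
    (h3 : ∀ m < s, m ≠ i → m ≠ j → ∀ k, v m k ∉ C) : False := by
  refine S.aug {i, j} ?_ {A, B, C} ?_ ?_ ?_ ?_
  · intro m hm; simp at hm ⊢; rcases hm with rfl | rfl <;> assumption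
  · intro F hF; simp at hF; rcases hF with rfl | rfl | rfl <;> assumption
  · intro F hF G hG hFG
    simp at hF hG
    rcases hF with rfl | rfl | rfl <;> rcases hG with rfl | rfl | rfl <;>
      first
      | exact absurd rfl hFG
      | assumption
      | (apply Disjoint.symm; assumption)
  · rw [Finset.card_eq_three.2 ⟨A, B, C, ne_of_disj (S.card3 A hA) hAB,
      ne_of_disj (S.card3 A hA) hAC, ne_of_disj (S.card3 B hB) hBC, rfl⟩, Finset.card_pair hij]
    simp
  · intro F hF m hm hmi
    simp at hF hmi
    rcases hF with rfl | rfl | rfl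
    · exact h1 m hm hmi.1 hmi.2
    · exact h2 m hm hmi.1 hmi.2
    · exact h3 m hm hmi.1 hmi.2

/-- cross-intersection of links -/
theorem Setup.LK_cross (S : Setup H s v) {i : ℕ} (hi : i < s) {k l : Fin 3} (hkl : k ≠ l)
    {P Q : Finset ℕ} (hP : P ∈ LK H s v i k) (hQ : Q ∈ LK H s v i l) : ¬ Disjoint P Q := by
  intro hd
  obtain ⟨p1, p2, p3⟩ := mem_LK hP
  obtain ⟨q1, q2, q3⟩ := mem_LK hQ
  refine S.aug2 hi p3 q3 ?_ ?_ ?_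
  · rw [Finset.disjoint_insert_left, Finset.disjoint_insert_right, Finset.mem_insert]
    refine ⟨?_, ?_, hd⟩
    · rintro (h | h)
      · exact hkl (S.inj i hi i hi _ _ h).2
      · exact q2 _ h i hi k rfl
    · intro h; exact p2 _ h i hi l rfl
  · intro j hj hji m hm
    rcases Finset.mem_insert.1 hm with h | h
    · exact hji (S.inj j hj i hi _ _ h).1
    · exact p2 _ h j hj m rfl
  · intro j hj hji m hm
    rcases Finset.mem_insert.1 hm with h | h
    · exact hji (S.inj j hj i hi _ _ h).1
    · exact q2 _ h j hj m rfl

theorem Setup.heavy (S : Setup H s v) {i : ℕ} (hi : i < s)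
    (h : 9 * s < ∑ k, (LK H s v i k).card) :
    ∃ a, 9 * s < (LK H s v i a).card ∧ ∀ k, k ≠ a → LK H s v i k = ∅ := by
  have hs := S.hs
  have h1 : ∃ a, 3 * s < (LK H s v i a).card := by
    by_contra hcon
    push Not at hcon
    have := Finset.sum_le_card_nsmul Finset.univ (fun k => (LK H s v i k).card) (3 * s)
      (fun k _ => hcon k)
    simp at this
    omega
  obtain ⟨a, ha⟩ := h1
  obtain ⟨A, hA, B, hB, hAB⟩ := link2 (LK H s v i a) (3 * s) (by omega) (fun F hF => (mem_LK hF).1)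
    (S.LK_deg hi a) ha
  have h4 : ∀ k, k ≠ a → (LK H s v i k).card ≤ 4 := by
    intro k hk
    exact cross4 _ A B (mem_LK hA).1 (mem_LK hB).1 hAB (fun F hF => (mem_LK hF).1)
      (fun F hF => S.LK_cross hi hk hF hA) (fun F hF => S.LK_cross hi hk hF hB)
  have hsum : ∑ k, (LK H s v i k).card ≤ (LK H s v i a).card + 8 := by
    rw [← Finset.add_sum_erase _ _ (Finset.mem_univ a)]
    have := Finset.sum_le_card_nsmul (Finset.univ.erase a) (fun k => (LK H s v i k).card) 4
      (fun k hk => h4 k (Finset.ne_of_mem_erase hk))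
    simp at this
    omega
  have h6 : ∀ k, k ≠ a → LK H s v i k = ∅ := by
    intro k hk
    by_contra hne
    obtain ⟨C, hC⟩ := Finset.nonempty_of_ne_empty hne
    obtain ⟨F, hF, hFC⟩ := avoid_ex (LK H s v i a) (3 * s) C (fun y _ => S.LK_deg hi a y) (by
      rw [(mem_LK hC).1]; omega)
    exact S.LK_cross hi hk hC hF hFC.symm
  refine ⟨a, ?_, h6⟩
  rw [← Finset.add_sum_erase _ _ (Finset.mem_univ a)] at h
  rw [Finset.sum_eq_zero] at h
  · simpa using h
  · intro k hk
    rw [h6 k (Finset.ne_of_mem_erase hk)]; simp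

theorem Setup.tri_out (S : Setup H s v) {i j : ℕ} (hi : i < s) (hj : j < s) {k l : Fin 3} {w : ℕ}
    (hw : Out s v w) : ∀ m < s, m ≠ i → m ≠ j → ∀ c, v m c ∉ ({v i k, v j l, w} : Finset ℕ) := by
  intro m hm hmi hmj c hc
  simp only [Finset.mem_insert, Finset.mem_singleton] at hc
  rcases hc with h | h | h
  · exact hmi (S.inj _ hm _ hi _ _ h).1
  · exact hmj (S.inj _ hm _ hj _ _ h).1
  · exact hw m hm c h

theorem Setup.one_out (S : Setup H s v) {i : ℕ} (hi : i < s) {k : Fin 3} {P : Finset ℕ}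
    (hP : ∀ x ∈ P, Out s v x) : ∀ m < s, m ≠ i → ∀ c, v m c ∉ insert (v i k) P := by
  intro m hm hmi c hc
  rcases Finset.mem_insert.1 hc with h | h
  · exact hmi (S.inj _ hm _ hi _ _ h).1
  · exact hP _ h m hm c rfl

theorem Setup.tri_tri (S : Setup H s v) {i j : ℕ} (hi : i < s) (hj : j < s) (hij : i ≠ j)
    {k l k' l' : Fin 3} (hk : k ≠ k') (hl : l ≠ l') {w w' : ℕ}
    (hw : Out s v w) (hw' : Out s v w') (hww : w ≠ w') :
    Disjoint ({v i k, v j l, w} : Finset ℕ) {v i k', v j l', w'} := by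
  have e1 := S.inj i hi i hi k k'
  have e2 := S.inj j hj j hj l l'
  have e3 := S.inj i hi j hj k l'
  have e4 := S.inj j hj i hi l k'
  have o1 := hw i hi k'
  have o2 := hw j hj l'
  have o3 := hw' i hi k
  have o4 := hw' j hj l
  rw [Finset.disjoint_left]
  intro x hx hx'
  simp only [Finset.mem_insert, Finset.mem_singleton] at hx hx'
  grind

theorem Setup.tri_one (S : Setup H s v) {i j : ℕ} (hi : i < s) (hj : j < s) (hij : i ≠ j)
    {k l a : Fin 3} (hk : k ≠ a) {w : ℕ} {P : Finset ℕ}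
    (hw : Out s v w) (hP : ∀ x ∈ P, Out s v x) (hwP : w ∉ P) :
    Disjoint ({v i k, v j l, w} : Finset ℕ) (insert (v i a) P) := by
  have e1 := S.inj i hi i hi k a
  have e4 := S.inj j hj i hi l a
  have o1 := hw i hi a
  rw [Finset.disjoint_left]
  intro x hx hx'
  simp only [Finset.mem_insert, Finset.mem_singleton] at hx hx'
  have o3 := fun h => hP x h i hi k
  have o4 := fun h => hP x h j hj l
  grind

theorem Setup.HH (S : Setup H s v) {i j : ℕ} (hi : i < s) (hj : j < s) (hij : i ≠ j)
    {a b : Fin 3} (ha : 9 * s < (LK H s v i a).card) (hb : 9 * s < (LK H s v j b).card)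
    {k l : Fin 3} (hk : k ≠ a) (hl : l ≠ b) : WK H s v i k j l = ∅ := by
  by_contra hne
  obtain ⟨w, hw⟩ := Finset.nonempty_of_ne_empty hne
  obtain ⟨hw, hwH⟩ := mem_WK.1 hw
  have hs := S.hs
  obtain ⟨P, hP, hPd⟩ := avoid_ex (LK H s v i a) (3 * s) {w} (fun y _ => S.LK_deg hi a y) (by
    simp; omega)
  obtain ⟨P1, P2, P3⟩ := mem_LK hP
  obtain ⟨Q, hQ, hQd⟩ := avoid_ex (LK H s v j b) (3 * s) (insert w P) (fun y _ => S.LK_deg hj b y) (by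
    have := Finset.card_insert_le w P
    nlinarith)
  obtain ⟨Q1, Q2, Q3⟩ := mem_LK hQ
  rw [Finset.disjoint_singleton_right] at hPd
  rw [Finset.disjoint_insert_right] at hQd
  refine S.aug3 hi hj hij hwH P3 Q3 (S.tri_one hi hj hij hk hw P2 hPd) ?_ ?_
    (S.tri_out hi hj hw) (fun m hm hmi hmj => S.one_out hi P2 m hm hmi)
    (fun m hm hmi hmj => S.one_out hj Q2 m hm hmj)
  · rw [Finset.insert_comm]
    exact S.tri_one hj hi hij.symm hl hw Q2 hQd.1
  · rw [Finset.disjoint_insert_left, Finset.disjoint_insert_right, Finset.mem_insert]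
    refine ⟨?_, ?_, hQd.2.symm⟩
    · rintro (h | h)
      · exact hij (S.inj i hi j hj _ _ h).1
      · exact Q2 _ h i hi a rfl
    · intro h; exact P2 _ h j hj b rfl

theorem pick_notMem {A T : Finset ℕ} (h : T.card < A.card) : ∃ w ∈ A, w ∉ T :=
  Finset.exists_mem_notMem_of_card_lt_card h

theorem Setup.HL (S : Setup H s v) {i j : ℕ} (hi : i < s) (hj : j < s) (hij : i ≠ j)
    {a : Fin 3} (ha : 9 * s < (LK H s v i a).card)
    {k l k' l' : Fin 3} (hk : k ≠ a) (hk' : k' ≠ a) (hkk : k ≠ k') (hll : l ≠ l') :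
    (WK H s v i k j l).card ≤ 2 ∨ (WK H s v i k' j l').card ≤ 2 := by
  by_contra hcon
  push Not at hcon
  have hs := S.hs
  obtain ⟨w, hw, -⟩ := pick_notMem (A := WK H s v i k j l) (T := ∅) (by rw [Finset.card_empty]; omega)
  obtain ⟨w', hw', hww⟩ := pick_notMem (A := WK H s v i k' j l') (T := {w}) (by simp; omega)
  rw [Finset.mem_singleton] at hww
  obtain ⟨hw, hwH⟩ := mem_WK.1 hw
  obtain ⟨hw', hwH'⟩ := mem_WK.1 hw'
  obtain ⟨P, hP, hPd⟩ := avoid_ex (LK H s v i a) (3 * s) {w, w'} (fun y _ => S.LK_deg hi a y) (by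
    have := Finset.card_le_two (a := w) (b := w')
    nlinarith)
  obtain ⟨P1, P2, P3⟩ := mem_LK hP
  rw [Finset.disjoint_insert_right, Finset.disjoint_singleton_right] at hPd
  exact S.aug3 hi hj hij hwH hwH' P3 (S.tri_tri hi hj hij hkk hll hw hw' (Ne.symm hww))
    (S.tri_one hi hj hij hk hw P2 hPd.1) (S.tri_one hi hj hij hk' hw' P2 hPd.2)
    (S.tri_out hi hj hw) (S.tri_out hi hj hw') (fun m hm hmi hmj => S.one_out hi P2 m hm hmi)

theorem Setup.LL (S : Setup H s v) {i j : ℕ} (hi : i < s) (hj : j < s) (hij : i ≠ j)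
    (c : Fin 3) : ∃ k, (WK H s v i k j (k + c)).card ≤ 2 := by
  by_contra hcon
  push Not at hcon
  obtain ⟨w, hw, -⟩ := pick_notMem (A := WK H s v i 0 j (0 + c)) (T := ∅) (by
    have := hcon 0; rw [Finset.card_empty]; omega)
  obtain ⟨w', hw', hww⟩ := pick_notMem (A := WK H s v i 1 j (1 + c)) (T := {w}) (by
    have := hcon 1; simp; omega)
  obtain ⟨w'', hw'', hww'⟩ := pick_notMem (A := WK H s v i 2 j (2 + c)) (T := {w, w'}) (by
    have := hcon 2
    have := Finset.card_le_two (a := w) (b := w')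
    omega)
  simp only [Finset.mem_insert, Finset.mem_singleton, not_or] at hww hww'
  obtain ⟨hw, hwH⟩ := mem_WK.1 hw
  obtain ⟨hw', hwH'⟩ := mem_WK.1 hw'
  obtain ⟨hw'', hwH''⟩ := mem_WK.1 hw''
  have a1 : (0 : Fin 3) + c ≠ 1 + c := by clear * -; revert c; decide
  have a2 : (0 : Fin 3) + c ≠ 2 + c := by clear * -; revert c; decide
  have a3 : (1 : Fin 3) + c ≠ 2 + c := by clear * -; revert c; decide
  exact S.aug3 hi hj hij hwH hwH' hwH''
    (S.tri_tri hi hj hij (by decide) a1 hw hw' (Ne.symm hww))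
    (S.tri_tri hi hj hij (by decide) a2 hw hw'' (Ne.symm hww'.1))
    (S.tri_tri hi hj hij (by decide) a3 hw' hw'' (Ne.symm hww'.2))
    (S.tri_out hi hj hw) (S.tri_out hi hj hw') (S.tri_out hi hj hw'')

/-- allowed rows -/
def rows (X : Option (Fin 3)) : Finset (Fin 3) := Finset.univ.filter (fun k => X ≠ some k)

def lt1 (X : Option (Fin 3)) : ℕ := if X = none then 1 else 0

/-- heavy marker -/
def Good (H : Finset (Finset ℕ)) (s : ℕ) (v : ℕ → Fin 3 → ℕ) (i : ℕ) (X : Option (Fin 3)) : Prop :=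
  (X = none → ∑ k, (LK H s v i k).card ≤ 9 * s) ∧
  ∀ a, X = some a → 9 * s < (LK H s v i a).card ∧ ∀ k, k ≠ a → LK H s v i k = ∅

theorem Setup.good_ex (S : Setup H s v) {i : ℕ} (hi : i < s) : ∃ X, Good H s v i X := by
  by_cases h : ∑ k, (LK H s v i k).card ≤ 9 * s
  · exact ⟨none, fun _ => h, by simp⟩
  · obtain ⟨a, ha⟩ := S.heavy hi (not_le.1 h)
    refine ⟨some a, by simp, ?_⟩
    intro b hb
    simp only [Option.some.injEq] at hb
    subst hb
    exact ha

theorem Setup.R_HL (S : Setup H s v) {i j : ℕ} (hi : i < s) (hj : j < s) (hij : i ≠ j)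
    {a : Fin 3} (ha : 9 * s < (LK H s v i a).card) :
    ∃ R : Finset (Fin 3 × Fin 3), R.card ≤ 4 ∧ (∀ p ∈ R, (WK H s v i p.1 j p.2).card ≤ 2) ∧
      ((rows (some a) ×ˢ Finset.univ) \ R).card ≤ 3 := by
  have h : ∀ c : Fin 3, ∃ t : Bool,
      (WK H s v i (if t then a + 1 else a + 2) j (if t then c else c + 1)).card ≤ 2 := by
    intro c
    rcases S.HL hi hj hij ha (k := a + 1) (k' := a + 2) (l := c) (l' := c + 1)
      (by clear * -; revert a; decide) (by clear * -; revert a; decide) (by clear * -; revert a; decide) (by clear * -; revert c; decide) with h | h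
    · exact ⟨true, by simpa using h⟩
    · exact ⟨false, by simpa using h⟩
  choose t ht using h
  refine ⟨Finset.univ.image (fun c : Fin 3 => (if t c then a + 1 else a + 2, if t c then c else c + 1)), ?_, ?_, ?_⟩
  · exact le_trans Finset.card_image_le (by simp)
  · intro p hp
    obtain ⟨c, -, rfl⟩ := Finset.mem_image.1 hp
    exact ht c
  · clear ht ha
    revert a t
    decide +kernel

theorem Setup.R_LL (S : Setup H s v) {i j : ℕ} (hi : i < s) (hj : j < s) (hij : i ≠ j) :
    ∃ R : Finset (Fin 3 × Fin 3), R.card ≤ 4 ∧ (∀ p ∈ R, (WK H s v i p.1 j p.2).card ≤ 2) ∧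
      ((Finset.univ ×ˢ Finset.univ) \ R).card ≤ 6 := by
  choose t ht using S.LL hi hj hij
  refine ⟨Finset.univ.image (fun c : Fin 3 => (t c, t c + c)), ?_, ?_, ?_⟩
  · exact le_trans Finset.card_image_le (by simp)
  · intro p hp
    obtain ⟨c, -, rfl⟩ := Finset.mem_image.1 hp
    exact ht c
  · clear ht
    revert t
    decide +kernel

theorem Setup.R_ex (S : Setup H s v) {i j : ℕ} (hi : i < s) (hj : j < s) (hij : i ≠ j)
    {X Y : Option (Fin 3)} (hX : Good H s v i X) (hY : Good H s v j Y) :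
    ∃ R : Finset (Fin 3 × Fin 3), R.card ≤ 4 ∧ (∀ p ∈ R, (WK H s v i p.1 j p.2).card ≤ 2) ∧
      ((rows X ×ˢ rows Y) \ R).card ≤ 3 * (lt1 X + lt1 Y) := by
  rcases X with _ | a <;> rcases Y with _ | b
  · exact S.R_LL hi hj hij
  · obtain ⟨R, h1, h2, h3⟩ := S.R_HL hj hi hij.symm (hY.2 b rfl).1
    refine ⟨R.image Prod.swap, le_trans Finset.card_image_le h1, ?_, ?_⟩
    · intro p hp
      obtain ⟨q, hq, rfl⟩ := Finset.mem_image.1 hp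
      rw [WK_symm]
      exact h2 q hq
    · refine le_trans ?_ h3
      refine Finset.card_le_card_of_injOn Prod.swap ?_ Prod.swap_injective.injOn
      rintro ⟨x, y⟩ hp
      simp [rows] at hp ⊢
      tauto
  · exact S.R_HL hi hj hij (hX.2 a rfl).1
  · refine ⟨rows (some a) ×ˢ rows (some b), ?_, ?_, by simp⟩
    · revert a b; clear * -
      have : ∀ a b : Fin 3, (rows (some a) ×ˢ rows (some b)).card ≤ 4 := by decide
      intro a _ b _
      exact this a b
    · intro p hp
      rw [Finset.mem_product] at hp
      simp [rows] at hp
      rw [S.HH hi hj hij (hX.2 a rfl).1 (hY.2 b rfl).1 (Ne.symm hp.1) (Ne.symm hp.2)]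
      simp

noncomputable def cA (H : Finset (Finset ℕ)) (s : ℕ) (v : ℕ → Fin 3 → ℕ) (X : ℕ → Option (Fin 3))
    (i : ℕ) : Finset (Finset ℕ) :=
  match X i with
  | some a => H.filter (fun F => v i a ∈ F)
  | none => Finset.univ.biUnion (fun k => (LK H s v i k).image (fun P => insert (v i k) P))

def cC (H : Finset (Finset ℕ)) (v : ℕ → Fin 3 → ℕ) (i : ℕ) : Finset (Finset ℕ) :=
  Finset.univ.biUnion (fun k : Fin 3 => H.filter (fun F => v i k ∈ F ∧ v i (k + 1) ∈ F))

def cD (H : Finset (Finset ℕ)) (v : ℕ → Fin 3 → ℕ) (X : ℕ → Option (Fin 3))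
    (R : ℕ → ℕ → Finset (Fin 3 × Fin 3)) (i j : ℕ) : Finset (Finset ℕ) :=
  ((rows (X i) ×ˢ rows (X j)) \ R i j).biUnion
    (fun p => H.filter (fun F => v i p.1 ∈ F ∧ v j p.2 ∈ F))

noncomputable def cE (H : Finset (Finset ℕ)) (s : ℕ) (v : ℕ → Fin 3 → ℕ)
    (R : ℕ → ℕ → Finset (Fin 3 × Fin 3)) (i j : ℕ) : Finset (Finset ℕ) :=
  (R i j).biUnion (fun p => (WK H s v i p.1 j p.2).image (fun w => {v i p.1, v j p.2, w}))

def cF (v : ℕ → Fin 3 → ℕ)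
    (R : ℕ → ℕ → Finset (Fin 3 × Fin 3)) (i j m : ℕ) : Finset (Finset ℕ) :=
  (R i j ×ˢ (Finset.univ : Finset (Fin 3))).image (fun q => {v i q.1.1, v j q.1.2, v m q.2})

theorem Setup.cA_card (S : Setup H s v) {X : ℕ → Option (Fin 3)} {i : ℕ}
    (hX : Good H s v i (X i)) :
    (cA H s v X i).card + 9 * s ^ 2 * lt1 (X i) ≤ 9 * s ^ 2 + 9 * s * lt1 (X i) := by
  unfold cA
  rcases h : X i with _ | a
  · have h1 := hX.1 h
    have : (Finset.univ.biUnion (fun k => (LK H s v i k).image (fun P => insert (v i k) P))).card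
        ≤ 9 * s := by
      refine le_trans Finset.card_biUnion_le (le_trans (Finset.sum_le_sum ?_) h1)
      intro k _
      exact Finset.card_image_le
    simp [lt1]
    omega
  · have := S.vd (v i a)
    simp [lt1]
    omega

theorem Setup.cC_card (S : Setup H s v) {i : ℕ} (hi : i < s) : (cC H v i).card ≤ 9 * s := by
  unfold cC
  refine le_trans (Finset.card_biUnion_le_card_mul _ _ (3 * s) ?_) (by simp; omega)
  intro k _
  apply S.pd
  intro h
  have := (S.inj i hi i hi _ _ h).2
  revert this
  clear * -
  revert k
  decide

theorem Setup.cD_card (S : Setup H s v) {X : ℕ → Option (Fin 3)}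
    {R : ℕ → ℕ → Finset (Fin 3 × Fin 3)} {i j : ℕ} (hi : i < s) (hj : j < s) (hij : i ≠ j)
    (hR : ((rows (X i) ×ˢ rows (X j)) \ R i j).card ≤ 3 * (lt1 (X i) + lt1 (X j))) :
    (cD H v X R i j).card ≤ 9 * s * (lt1 (X i) + lt1 (X j)) := by
  unfold cD
  refine le_trans (Finset.card_biUnion_le_card_mul _ _ (3 * s) ?_) (by nlinarith)
  intro p _
  apply S.pd
  intro h
  exact hij (S.inj i hi j hj _ _ h).1

theorem cE_card {R : ℕ → ℕ → Finset (Fin 3 × Fin 3)} {i j : ℕ} (h1 : (R i j).card ≤ 4)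
    (h2 : ∀ p ∈ R i j, (WK H s v i p.1 j p.2).card ≤ 2) : (cE H s v R i j).card ≤ 8 := by
  unfold cE
  refine le_trans (Finset.card_biUnion_le_card_mul _ _ 2 ?_) (by omega)
  intro p hp
  exact le_trans Finset.card_image_le (h2 p hp)

theorem cF_card {R : ℕ → ℕ → Finset (Fin 3 × Fin 3)} {i j m : ℕ} (h1 : (R i j).card ≤ 4) :
    (cF v R i j m).card ≤ 12 := by
  unfold cF
  refine le_trans Finset.card_image_le ?_
  rw [Finset.card_product]
  simp
  omega

theorem third {F : Finset ℕ} (hF : F.card = 3) {x y : ℕ} (hx : x ∈ F) (hy : y ∈ F) (hxy : x ≠ y) :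
    ∃ w, w ≠ x ∧ w ≠ y ∧ F = {x, y, w} := by
  have h1 : y ∈ F.erase x := Finset.mem_erase.2 ⟨hxy.symm, hy⟩
  have h2 : ((F.erase x).erase y).card = 1 := by
    rw [Finset.card_erase_of_mem h1, Finset.card_erase_of_mem hx, hF]
  obtain ⟨w, hw⟩ := Finset.card_eq_one.1 h2
  have h3 : w ∈ (F.erase x).erase y := by rw [hw]; simp
  rw [Finset.mem_erase, Finset.mem_erase] at h3
  refine ⟨w, h3.2.1, h3.1, ?_⟩
  rw [← Finset.insert_erase hx, ← Finset.insert_erase h1, hw]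

theorem Setup.cover (S : Setup H s v) {X : ℕ → Option (Fin 3)}
    {R : ℕ → ℕ → Finset (Fin 3 × Fin 3)} (hX : ∀ i < s, Good H s v i (X i))
    {F : Finset ℕ} (hF : F ∈ H)
    (nA : ∀ i < s, F ∉ cA H s v X i) (nC : ∀ i < s, F ∉ cC H v i)
    (nD : ∀ j < s, ∀ i < j, F ∉ cD H v X R i j) (nE : ∀ j < s, ∀ i < j, F ∉ cE H s v R i j)
    (nF : ∀ m < s, ∀ j < m, ∀ i < j, F ∉ cF v R i j m) : False := by
  have hF3 := S.card3 F hF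
  have hrow : ∀ i < s, ∀ k, v i k ∈ F → k ∈ rows (X i) := by
    intro i hi k hk
    by_contra hcon
    simp [rows] at hcon
    apply nA i hi
    unfold cA
    rw [hcon]
    simp [hF, hk]
  have huniq : ∀ i < s, ∀ k l, v i k ∈ F → v i l ∈ F → k = l := by
    intro i hi k l hk hl
    by_contra hkl
    have h0 : ∀ c, ¬ (v i c ∈ F ∧ v i (c + 1) ∈ F) := by
      intro c hc
      apply nC i hi
      unfold cC
      rw [Finset.mem_biUnion]
      exact ⟨c, by simp, by simp [hF, hc]⟩
    have : l = k + 1 ∨ k = l + 1 := by clear * - hkl; revert k l; decide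
    rcases this with h | h
    · exact h0 k ⟨hk, h ▸ hl⟩
    · exact h0 l ⟨hl, h ▸ hk⟩
  have hne : ((Finset.range s).filter (fun i => ∃ k, v i k ∈ F)).Nonempty := by
    by_contra hcon
    rw [Finset.not_nonempty_iff_eq_empty, Finset.filter_eq_empty_iff] at hcon
    refine S.aug ∅ (by simp) {F} (by simpa using hF) (by simp) (by simp) ?_
    intro G hG j hj _ k hk
    rw [Finset.mem_singleton] at hG
    subst hG
    exact hcon (Finset.mem_range.2 hj) ⟨k, hk⟩
  obtain ⟨i, hi, -⟩ := Finset.exists_min_image _ id hne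
  obtain ⟨i, hi, himin⟩ := Finset.exists_min_image _ id hne
  rw [Finset.mem_filter, Finset.mem_range] at hi
  obtain ⟨his, k, hk⟩ := hi
  have hmin1 : ∀ m < s, ∀ c, v m c ∈ F → i ≤ m := by
    intro m hm c hc
    exact himin m (by rw [Finset.mem_filter, Finset.mem_range]; exact ⟨hm, c, hc⟩)
  by_cases hne2 : ((Finset.range s).filter (fun j => j ≠ i ∧ ∃ k, v j k ∈ F)).Nonempty
  · obtain ⟨j, hj, hjmin⟩ := Finset.exists_min_image _ id hne2
    rw [Finset.mem_filter, Finset.mem_range] at hj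
    obtain ⟨hjs, hji, l, hl⟩ := hj
    have hij : i < j := lt_of_le_of_ne (hmin1 j hjs l hl) (Ne.symm hji)
    have hR : (k, l) ∈ R i j := by
      by_contra hcon
      apply nD j hjs i hij
      unfold cD
      rw [Finset.mem_biUnion]
      refine ⟨(k, l), ?_, by simp [hF, hk, hl]⟩
      rw [Finset.mem_sdiff, Finset.mem_product]
      exact ⟨⟨hrow i his k hk, hrow j hjs l hl⟩, hcon⟩
    obtain ⟨w, hwx, hwy, hFe⟩ := third hF3 hk hl (fun h => hji (S.inj i his j hjs _ _ h).1.symm)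
    by_cases hw : Out s v w
    · apply nE j hjs i hij
      unfold cE
      rw [Finset.mem_biUnion]
      refine ⟨(k, l), hR, ?_⟩
      rw [Finset.mem_image]
      exact ⟨w, mem_WK.2 ⟨hw, hFe ▸ hF⟩, hFe.symm⟩
    · unfold Out at hw
      push Not at hw
      obtain ⟨m, hm, c, rfl⟩ := hw
      have hmF : v m c ∈ F := by rw [hFe]; simp
      have hmi : m ≠ i := by
        rintro rfl
        exact hwx (by rw [huniq m hm c k hmF hk])
      have hmj : m ≠ j := by
        rintro rfl
        exact hwy (by rw [huniq m hm c l hmF hl])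
      have : j ≤ m := hjmin m (by rw [Finset.mem_filter, Finset.mem_range]; exact ⟨hm, hmi, c, hmF⟩)
      apply nF m hm j (lt_of_le_of_ne this (Ne.symm hmj)) i hij
      unfold cF
      rw [Finset.mem_image]
      exact ⟨((k, l), c), by simp [hR], hFe.symm⟩
  · rw [Finset.not_nonempty_iff_eq_empty, Finset.filter_eq_empty_iff] at hne2
    have hLK : F.erase (v i k) ∈ LK H s v i k := by
      apply LK_mem
      refine ⟨by rw [Finset.card_erase_of_mem hk, hF3], ?_, by rwa [Finset.insert_erase hk]⟩
      intro x hx m hm c hc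
      subst hc
      rw [Finset.mem_erase] at hx
      by_cases hmi : m = i
      · subst hmi
        exact hx.1 (by rw [huniq m hm c k hx.2 hk])
      · exact hne2 (Finset.mem_range.2 hm) ⟨hmi, c, hx.2⟩
    rcases hXi : X i with _ | a
    · apply nA i his
      unfold cA
      rw [hXi]
      simp only [Finset.mem_biUnion, Finset.mem_image]
      exact ⟨k, by simp, _, hLK, Finset.insert_erase hk⟩
    · have h1 := (hX i his).2 a hXi
      have hka : k = a := by
        by_contra hka
        rw [h1.2 k hka] at hLK
        simp at hLK
      have := hrow i his k hk
      rw [hXi, hka] at this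
      simp [rows] at this

theorem sum_pairs (L : ℕ → ℕ) (s : ℕ) : ∑ j ∈ Finset.range s, ∑ i ∈ Finset.range j, (L i + L j) +
    ∑ j ∈ Finset.range s, L j = s * ∑ j ∈ Finset.range s, L j := by
  induction s with
  | zero => simp
  | succ n ih =>
    rw [Finset.sum_range_succ, Finset.sum_range_succ, Finset.sum_add_distrib]
    simp only [Finset.sum_const, Finset.card_range, smul_eq_mul]
    nlinarith

theorem sum_pairs_c (s : ℕ) : ((∑ j ∈ Finset.range s, ∑ i ∈ Finset.range j, 8 : ℕ) : ℚ) =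
    4 * s * (s - 1) := by
  induction s with
  | zero => simp
  | succ n ih =>
    rw [Finset.sum_range_succ]
    push_cast at ih ⊢
    rw [ih]
    simp
    ring

theorem sum_triples_c (s : ℕ) : ((∑ m ∈ Finset.range s, ∑ j ∈ Finset.range m,
    ∑ i ∈ Finset.range j, 12 : ℕ) : ℚ) = 2 * s * (s - 1) * (s - 2) := by
  induction s with
  | zero => simp
  | succ n ih =>
    rw [Finset.sum_range_succ]
    have h := sum_pairs_c n
    simp only [Finset.sum_const, Finset.card_range, smul_eq_mul, ← Finset.sum_mul] at ih h ⊢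
    push_cast at ih h ⊢
    rw [ih]
    linarith

theorem Setup.main (S : Setup H s v) : (H.card : ℚ) ≤ 11 * (s : ℚ) ^ 3 + 7 * (s : ℚ) ^ 2 := by
  have hX : ∀ i, ∃ X, i < s → Good H s v i X := by
    intro i
    by_cases hi : i < s
    · obtain ⟨X, hX⟩ := S.good_ex hi
      exact ⟨X, fun _ => hX⟩
    · exact ⟨none, fun h => absurd h hi⟩
  choose X hX using hX
  have hR : ∀ i j, ∃ R : Finset (Fin 3 × Fin 3), i < j → j < s → R.card ≤ 4 ∧
      (∀ p ∈ R, (WK H s v i p.1 j p.2).card ≤ 2) ∧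
      ((rows (X i) ×ˢ rows (X j)) \ R).card ≤ 3 * (lt1 (X i) + lt1 (X j)) := by
    intro i j
    by_cases h : i < j ∧ j < s
    · obtain ⟨R, hR⟩ := S.R_ex (h.1.trans h.2) h.2 h.1.ne (hX i (h.1.trans h.2)) (hX j h.2)
      exact ⟨R, fun _ _ => hR⟩
    · exact ⟨∅, fun h1 h2 => absurd ⟨h1, h2⟩ h⟩
  choose R hR using hR
  have hsub : H ⊆ (Finset.range s).biUnion (cA H s v X) ∪ (Finset.range s).biUnion (cC H v) ∪
      (Finset.range s).biUnion (fun j => (Finset.range j).biUnion (fun i => cD H v X R i j)) ∪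
      (Finset.range s).biUnion (fun j => (Finset.range j).biUnion (fun i => cE H s v R i j)) ∪
      (Finset.range s).biUnion (fun m => (Finset.range m).biUnion (fun j =>
        (Finset.range j).biUnion (fun i => cF v R i j m))) := by
    intro F hF
    by_contra hcon
    simp only [Finset.mem_union, Finset.mem_biUnion, Finset.mem_range, not_or, not_exists,
      not_and] at hcon
    obtain ⟨⟨⟨⟨nA, nC⟩, nD⟩, nE⟩, nF⟩ := hcon
    exact S.cover hX hF nA nC nD nE nF
  have hc := Finset.card_le_card hsub
  have bA : ((Finset.range s).biUnion (cA H s v X)).card +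
      9 * s ^ 2 * ∑ i ∈ Finset.range s, lt1 (X i) ≤
      9 * s ^ 3 + 9 * s * ∑ i ∈ Finset.range s, lt1 (X i) := by
    have h1 : ((Finset.range s).biUnion (cA H s v X)).card ≤
      ∑ i ∈ Finset.range s, (cA H s v X i).card := Finset.card_biUnion_le
    have h2 := Finset.sum_le_sum (fun i (hi : i ∈ Finset.range s) =>
      S.cA_card (hX i (Finset.mem_range.1 hi)))
    rw [Finset.sum_add_distrib, Finset.sum_add_distrib] at h2
    simp only [← Finset.mul_sum, Finset.sum_const, Finset.card_range, smul_eq_mul] at h2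
    have : s * (9 * s ^ 2) = 9 * s ^ 3 := by ring
    linarith
  have bC : ((Finset.range s).biUnion (cC H v)).card ≤ s * (9 * s) := by
    have := Finset.card_biUnion_le_card_mul (Finset.range s) (cC H v) (9 * s)
      (fun i hi => S.cC_card (Finset.mem_range.1 hi))
    simpa using this
  have bD : ((Finset.range s).biUnion (fun j => (Finset.range j).biUnion
      (fun i => cD H v X R i j))).card ≤ 9 * s * ∑ j ∈ Finset.range s, ∑ i ∈ Finset.range j,
        (lt1 (X i) + lt1 (X j)) := by
    rw [Finset.mul_sum]
    refine le_trans Finset.card_biUnion_le (Finset.sum_le_sum ?_)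
    intro j hj
    rw [Finset.mul_sum]
    refine le_trans Finset.card_biUnion_le (Finset.sum_le_sum ?_)
    intro i hi
    rw [Finset.mem_range] at hi hj
    exact S.cD_card (hi.trans hj) hj hi.ne (hR i j hi hj).2.2
  have bE : ((Finset.range s).biUnion (fun j => (Finset.range j).biUnion
      (fun i => cE H s v R i j))).card ≤ ∑ j ∈ Finset.range s, ∑ i ∈ Finset.range j, 8 := by
    refine le_trans Finset.card_biUnion_le (Finset.sum_le_sum ?_)
    intro j hj
    refine le_trans Finset.card_biUnion_le (Finset.sum_le_sum ?_)
    intro i hi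
    rw [Finset.mem_range] at hi hj
    exact cE_card (hR i j hi hj).1 (hR i j hi hj).2.1
  have bF : ((Finset.range s).biUnion (fun m => (Finset.range m).biUnion (fun j =>
        (Finset.range j).biUnion (fun i => cF v R i j m)))).card ≤
      ∑ m ∈ Finset.range s, ∑ j ∈ Finset.range m, ∑ i ∈ Finset.range j, 12 := by
    refine le_trans Finset.card_biUnion_le (Finset.sum_le_sum ?_)
    intro m hm
    refine le_trans Finset.card_biUnion_le (Finset.sum_le_sum ?_)
    intro j hj
    refine le_trans Finset.card_biUnion_le (Finset.sum_le_sum ?_)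
    intro i hi
    rw [Finset.mem_range] at hi hj hm
    exact cF_card (hR i j hi (hj.trans hm)).1
  have hu : ∀ a b c d e : Finset (Finset ℕ), (a ∪ b ∪ c ∪ d ∪ e).card ≤
      a.card + b.card + c.card + d.card + e.card := by
    intro a b c d e
    have h1 := Finset.card_union_le (a ∪ b ∪ c ∪ d) e
    have h2 := Finset.card_union_le (a ∪ b ∪ c) d
    have h3 := Finset.card_union_le (a ∪ b) c
    have h4 := Finset.card_union_le a b
    omega
  have hc := le_trans hc (hu _ _ _ _ _)
  have sp := sum_pairs (fun i => lt1 (X i)) s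
  have s2 := sum_pairs_c s
  have s3 := sum_triples_c s
  generalize (∑ j ∈ Finset.range s, ∑ i ∈ Finset.range j, (lt1 (X i) + lt1 (X j))) = P at *
  generalize (∑ i ∈ Finset.range s, lt1 (X i)) = T at *
  generalize (∑ j ∈ Finset.range s, ∑ i ∈ Finset.range j, 8) = E at *
  generalize (∑ m ∈ Finset.range s, ∑ j ∈ Finset.range m, ∑ i ∈ Finset.range j, 12) = G at *
  have hAD : 9 * s * P + 9 * s * T = 9 * s ^ 2 * T := by
    rw [← mul_add, sp]; ring
  have hfin : H.card ≤ 9 * s ^ 3 + s * (9 * s) + E + G := by omega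
  have hq : (H.card : ℚ) ≤ 9 * (s : ℚ) ^ 3 + s * (9 * s) + E + G := by exact_mod_cast hfin
  rw [s2, s3] at hq
  nlinarith

/-- A 2-resilient 3-graph with matching number `s ≥ 3` has at most
`73/6·s³ + 50` edges, and at most `73/6·s³` edges when `s ≥ 21`. -/
theorem stmt13 (n s : ℕ) (hs : 3 ≤ s) (H : Finset (Finset ℕ))
    (hH : H ⊆ (Finset.range n).powersetCard 3)
    (hres : Resilient 2 H) (hν : matchingNumber H = s) :
    (H.card : ℚ) ≤ 73 / 6 * (s : ℚ) ^ 3 + 50 ∧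
    (21 ≤ s → (H.card : ℚ) ≤ 73 / 6 * (s : ℚ) ^ 3) := by
  obtain ⟨v, S⟩ := setup_ex s hs H (fun F hF => (Finset.mem_powersetCard.1 (hH hF)).2) hres hν
  have hm := S.main
  by_cases h6 : 6 ≤ s
  · have h6' : (6 : ℚ) ≤ s := by exact_mod_cast h6
    have h : (7 : ℚ) * s ^ 2 ≤ 7 / 6 * s ^ 3 := by
      have := mul_le_mul_of_nonneg_left h6' (sq_nonneg (s : ℚ))
      nlinarith
    exact ⟨by linarith, fun _ => by linarith⟩
  · refine ⟨?_, fun h => by omega⟩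
    clear hν hres
    have : s = 3 ∨ s = 4 ∨ s = 5 := by omega
    rcases this with h | h | h <;> subst h <;> refine hm.trans ?_ <;> norm_num
end

section
/- Let H ⊆ binom([n],3) be a 2-resilient 3-graph with matching number 2 such that there exist disjoint edges A, B ∈ H for which both {F ∈ H : F ∩ A = ∅} and {F ∈ H : F ∩ B = ∅} are stars (all edges in each family share a common vertex). Then |H| ≤ 56. -/
namespace S14

theorem mn_bdd (H : Finset (Finset ℕ)) : BddAbove {m | ∃ M : Finset (Finset ℕ), M ⊆ H ∧ M.card = m ∧
    (M : Set (Finset ℕ)).PairwiseDisjoint id} := by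
  refine ⟨H.card, ?_⟩
  rintro m ⟨M, hM, rfl, _⟩
  exact Finset.card_le_card hM

theorem no3 (H : Finset (Finset ℕ)) (h3 : ∀ F ∈ H, F.card = 3) (hν : matchingNumber H = 2)
    (E F G : Finset ℕ) (hE : E ∈ H) (hF : F ∈ H) (hG : G ∈ H)
    (hEF : Disjoint E F) (hEG : Disjoint E G) (hFG : Disjoint F G) : False := by
  have key : ∀ X Y : Finset ℕ, X ∈ H → Disjoint X Y → X ≠ Y := by
    rintro X Y hX hd rfl
    have := h3 X hX
    rw [disjoint_self] at hd
    simp [hd] at this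
  have h : 3 ≤ matchingNumber H := by
    apply le_csSup (mn_bdd H)
    refine ⟨{E, F, G}, ?_, ?_, ?_⟩
    · intro X hX
      simp only [Finset.mem_insert, Finset.mem_singleton] at hX
      rcases hX with rfl | rfl | rfl <;> assumption
    · exact Finset.card_eq_three.2 ⟨E, F, G, key _ _ hE hEF, key _ _ hE hEG, key _ _ hF hFG, rfl⟩
    · intro X hX Y hY hne
      simp only [Finset.coe_insert, Finset.coe_singleton, Set.mem_insert_iff,
        Set.mem_singleton_iff] at hX hY
      simp only [Function.onFun, id]
      rcases hX with rfl | rfl | rfl <;> rcases hY with rfl | rfl | rfl <;>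
        first
        | exact absurd rfl hne
        | assumption
        | (apply Disjoint.symm; assumption)
  omega

theorem res2 (H : Finset (Finset ℕ)) (hres : Resilient 2 H) (hν : matchingNumber H = 2)
    (T : Finset ℕ) (hT : T.card ≤ 2) :
    ∃ E ∈ H, ∃ F ∈ H, Disjoint E F ∧ Disjoint E T ∧ Disjoint F T := by
  have h := hres T hT
  rw [hν] at h
  have hm := Nat.sSup_mem (s := {m | ∃ M : Finset (Finset ℕ),
    M ⊆ (H.filter fun F => Disjoint F T) ∧ M.card = m ∧
    (M : Set (Finset ℕ)).PairwiseDisjoint id}) ⟨0, ∅, by simp⟩ (mn_bdd _)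
  change matchingNumber _ ∈ _ at hm
  rw [h] at hm
  obtain ⟨M, hM, hc, hd⟩ := hm
  obtain ⟨E, F, hne, rfl⟩ := Finset.card_eq_two.1 hc
  have hE := Finset.mem_filter.1 (hM (show E ∈ ({E, F} : Finset (Finset ℕ)) by simp))
  have hF := Finset.mem_filter.1 (hM (show F ∈ ({E, F} : Finset (Finset ℕ)) by simp))
  exact ⟨E, hE.1, F, hF.1, hd (by simp) (by simp) hne, hE.2, hF.2⟩

/-- the sixteen pairs which may extend outside -/
def P : Finset (Finset (Fin 8)) :=
  {{0,4},{0,5},{3,1},{3,2},{0,1},{0,2},{3,4},{3,5},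
   {1,4},{1,5},{2,4},{2,5},{0,6},{0,7},{3,6},{3,7}}

def Heavy : Finset (Finset (Fin 8)) :=
  {{1,4},{1,5},{2,4},{2,5},{0,6},{0,7},{3,6},{3,7}}

def Mid : Finset (Finset (Fin 8)) := {{1,4},{1,5},{2,4},{2,5}}

def Bad (T : Finset (Fin 8)) : Prop := T ⊆ {1,2,6,7} ∨ T ⊆ {4,5,6,7}

instance : DecidablePred Bad := fun T => by unfold Bad; infer_instance

theorem classify : ∀ S : Finset (Fin 8), S.card ≤ 3 →
    ¬ Disjoint S {0,1,2,3,4,5} → ¬ Disjoint S {1,4,6,2,5,7} →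
    (Disjoint S {0,1,2} → 3 ∈ S) → (Disjoint S {3,4,5} → 0 ∈ S) →
    (S.card = 3 ∧ ¬ Bad S) ∨ S ∈ P := by decide +kernel

theorem cardP2 : ∀ e ∈ P, e.card = 2 := by decide +kernel

theorem cnt_all : ((Finset.powersetCard 3 (Finset.univ : Finset (Fin 8))).filter
    (fun T => ¬ Bad T)).card = 48 := by decide +kernel

theorem cnt_heavy : ∀ e ∈ Heavy, ((Finset.powersetCard 3 (Finset.univ : Finset (Fin 8))).filter
    (fun T => ¬ Bad T ∧ ¬ Disjoint T e)).card = 30 := by decide +kernel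

theorem cnt_mid : ∀ e ∈ Mid, ∀ w ∉ e, ∀ w' ∉ e, w ≠ w' →
    ((Finset.powersetCard 3 (Finset.univ : Finset (Fin 8))).filter
    (fun T => (¬ Bad T ∧ ¬ Disjoint T e) ∧ T ≠ insert w e ∧ T ≠ insert w' e)).card = 28 := by
  decide +kernel

theorem find_mid : ∀ e ∈ P, ∀ f ∈ P, Disjoint e f → ∀ g ∈ P, Disjoint e g → Disjoint f g →
    e ∈ Mid ∨ f ∈ Mid ∨ g ∈ Mid := by decide +kernel

theorem find_w (e f g : Finset (Fin 8)) (he : e.card = 2) (hf : f.card = 2) (hg : g.card = 2) :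
    ∃ w w', w ≠ w' ∧ w ∉ e ∧ w ∉ f ∧ w ∉ g ∧ w' ∉ e ∧ w' ∉ f ∧ w' ∉ g := by
  have h1 : (e ∪ f ∪ g).card ≤ 6 := by
    have := Finset.card_union_le (e ∪ f) g
    have := Finset.card_union_le e f
    omega
  have h2 : 1 < ((e ∪ f ∪ g)ᶜ).card := by
    rw [Finset.card_compl, Fintype.card_fin]; omega
  obtain ⟨w, hw, w', hw', hne⟩ := Finset.one_lt_card.1 h2
  simp only [Finset.mem_compl, Finset.mem_union, not_or] at hw hw'
  exact ⟨w, w', hne, hw.1.1, hw.1.2, hw.2, hw'.1.1, hw'.1.2, hw'.2⟩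

/-- at most half of the triples of the complement of a pair -/
theorem half (K : Finset (Finset (Fin 8))) (e : Finset (Fin 8)) (he : e.card = 2)
    (h3 : ∀ T ∈ K, T.card = 3)
    (hK : ∀ T ∈ K, ∀ T' ∈ K, Disjoint T e → Disjoint T' e → ¬ Disjoint T T') :
    (K.filter (fun T => Disjoint T e)).card ≤ 10 := by
  set K' := K.filter (fun T => Disjoint T e) with hK'
  have hc : (eᶜ).card = 6 := by rw [Finset.card_compl]; simp [he]
  have hsub : ∀ T ∈ K', T ⊆ eᶜ := by
    intro T hT
    exact Finset.subset_compl_iff_disjoint_right.2 (Finset.mem_filter.1 hT).2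
  have hinj : Set.InjOn (fun T => eᶜ \ T) (K' : Set (Finset (Fin 8))) := by
    intro T hT T' hT' h
    have h' : eᶜ \ T = eᶜ \ T' := h
    rw [← Finset.sdiff_sdiff_eq_self (hsub T hT), h', Finset.sdiff_sdiff_eq_self (hsub T' hT')]
  have hci := Finset.card_image_of_injOn hinj
  have hdis : Disjoint K' (K'.image (fun T => eᶜ \ T)) := by
    rw [Finset.disjoint_left]
    intro T hT hT2
    obtain ⟨T', hT', rfl⟩ := Finset.mem_image.1 hT2
    have a := Finset.mem_filter.1 hT
    have b := Finset.mem_filter.1 hT'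
    exact hK _ a.1 _ b.1 a.2 b.2 Finset.sdiff_disjoint
  have hle : K' ∪ (K'.image (fun T => eᶜ \ T)) ⊆ Finset.powersetCard 3 (eᶜ) := by
    intro T hT
    rw [Finset.mem_powersetCard]
    rcases Finset.mem_union.1 hT with hT | hT
    · exact ⟨hsub T hT, h3 T (Finset.mem_filter.1 hT).1⟩
    · obtain ⟨T', hT', rfl⟩ := Finset.mem_image.1 hT
      refine ⟨Finset.sdiff_subset, ?_⟩
      rw [Finset.card_sdiff_of_subset (hsub T' hT'), hc, h3 T' (Finset.mem_filter.1 hT').1]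
  have := Finset.card_le_card hle
  rw [Finset.card_union_of_disjoint hdis, hci, Finset.card_powersetCard, hc] at this
  have h20 : Nat.choose 6 3 = 20 := by decide
  omega

/-- The finite counting core. -/
theorem core (K : Finset (Finset (Fin 8))) (c : Finset (Fin 8) → ℕ)
    (h3 : ∀ T ∈ K, T.card = 3) (hbad : ∀ T ∈ K, ¬ Bad T)
    (hC : {1,4,6} ∈ K) (hD : {2,5,7} ∈ K)
    (hc2 : ∀ e, e ∈ P → c e ≤ 2)
    (F3 : ∀ e, e ∈ P → 1 ≤ c e → ∀ T ∈ K, ∀ T' ∈ K, Disjoint T e → Disjoint T' e → ¬ Disjoint T T')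
    (F4 : ∀ e f, 2 ≤ c e → 1 ≤ c f → Disjoint e f → ∀ T ∈ K, Disjoint T e → ¬ Disjoint T f)
    (F5 : ∀ e, e ∈ P → 2 ≤ c e → ∃ f g, f ∈ P ∧ g ∈ P ∧ 1 ≤ c f ∧ 1 ≤ c g ∧ Disjoint e f ∧
      Disjoint e g ∧ Disjoint f g ∧ ∀ T ∈ K, Disjoint T f → ¬ Disjoint T g) :
    K.card + ∑ e ∈ P, c e ≤ 56 := by
  have hconf : ∀ e f T, T ∈ K → e ∈ P → f ∈ P → Disjoint e f → Disjoint T e → Disjoint T f →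
      c e + c f ≤ 2 := by
    intro e f T hT he hf hd h1 h2
    have := hc2 e he
    have := hc2 f hf
    by_contra hlt
    by_cases h : 2 ≤ c e
    · exact F4 e f h (by omega) hd T hT h1 h2
    · exact F4 f e (by omega) (by omega) hd.symm T hT h2 h1
  have hsum : ∑ e ∈ P, c e = c {0,4} + c {0,5} + c {3,1} + c {3,2} + c {0,1} + c {0,2} + c {3,4}
      + c {3,5} + c {1,4} + c {1,5} + c {2,4} + c {2,5} + c {0,6} + c {0,7} + c {3,6} + c {3,7} := by
    unfold P
    repeat rw [Finset.sum_insert (by decide +kernel)]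
    rw [Finset.sum_singleton]
    ring
  have hsplit : ∀ e, K.card = (K.filter (fun T => Disjoint T e)).card +
      (K.filter (fun T => ¬ Disjoint T e)).card := fun e =>
    (Finset.card_filter_add_card_filter_not _).symm
  have hKp : ∀ T ∈ K, T ∈ Finset.powersetCard 3 (Finset.univ : Finset (Fin 8)) := fun T hT =>
    Finset.mem_powersetCard.2 ⟨Finset.subset_univ _, h3 T hT⟩
  by_cases hdbl : ∃ e ∈ P, 2 ≤ c e
  · obtain ⟨e, he, hce⟩ := hdbl
    -- a mid pair with missing extensions
    have hmid : ∃ m ∈ Mid, 1 ≤ c m ∧ ∃ w w', w ≠ w' ∧ w ∉ m ∧ w' ∉ m ∧ insert w m ∉ K ∧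
        insert w' m ∉ K := by
      obtain ⟨f, g, hf, hg, hcf, hcg, hef, heg, hfg, hT⟩ := F5 e he hce
      obtain ⟨w, w', hne, h1, h2, h3', h4, h5, h6⟩ :=
        find_w e f g (cardP2 e he) (cardP2 f hf) (cardP2 g hg)
      rcases find_mid e he f hf hef g hg heg hfg with h | h | h
      · refine ⟨e, h, by omega, w, w', hne, h1, h4, fun hk => ?_, fun hk => ?_⟩
        · exact hT _ hk (Finset.disjoint_insert_left.2 ⟨h2, hef⟩)
            (Finset.disjoint_insert_left.2 ⟨h3', heg⟩)
        · exact hT _ hk (Finset.disjoint_insert_left.2 ⟨h5, hef⟩)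
            (Finset.disjoint_insert_left.2 ⟨h6, heg⟩)
      · refine ⟨f, h, by omega, w, w', hne, h2, h5, fun hk => ?_, fun hk => ?_⟩
        · exact F4 e g hce hcg heg _ hk (Finset.disjoint_insert_left.2 ⟨h1, hef.symm⟩)
            (Finset.disjoint_insert_left.2 ⟨h3', hfg⟩)
        · exact F4 e g hce hcg heg _ hk (Finset.disjoint_insert_left.2 ⟨h4, hef.symm⟩)
            (Finset.disjoint_insert_left.2 ⟨h6, hfg⟩)
      · refine ⟨g, h, by omega, w, w', hne, h3', h6, fun hk => ?_, fun hk => ?_⟩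
        · exact F4 e f hce hcf hef _ hk (Finset.disjoint_insert_left.2 ⟨h1, heg.symm⟩)
            (Finset.disjoint_insert_left.2 ⟨h2, hfg.symm⟩)
        · exact F4 e f hce hcf hef _ hk (Finset.disjoint_insert_left.2 ⟨h4, heg.symm⟩)
            (Finset.disjoint_insert_left.2 ⟨h5, hfg.symm⟩)
    obtain ⟨m, hm, hcm, w, w', hne, hw, hw', hk, hk'⟩ := hmid
    have hmP : m ∈ P := (show ∀ m ∈ Mid, m ∈ P by decide +kernel) m hm
    have hh := half K m (cardP2 m hmP) h3 (F3 m hmP hcm)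
    have h28 := cnt_mid m hm w hw w' hw' hne
    have hle : (K.filter (fun T => ¬ Disjoint T m)).card ≤ 28 := by
      rw [← h28]
      apply Finset.card_le_card
      intro T hT
      obtain ⟨hT1, hT2⟩ := Finset.mem_filter.1 hT
      refine Finset.mem_filter.2 ⟨hKp T hT1, ⟨hbad T hT1, hT2⟩, ?_, ?_⟩
      · rintro rfl; exact hk hT1
      · rintro rfl; exact hk' hT1
    have hs := hsplit m
    have q1 := hconf {0,4} {3,1} _ hD (by decide) (by decide) (by decide) (by decide) (by decide)
    have q2 := hconf {0,5} {3,2} _ hC (by decide) (by decide) (by decide) (by decide) (by decide)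
    have q3 := hconf {1,4} {0,6} _ hD (by decide) (by decide) (by decide) (by decide) (by decide)
    have q4 := hconf {1,4} {3,6} _ hD (by decide) (by decide) (by decide) (by decide) (by decide)
    have q5 := hconf {0,6} {3,4} _ hD (by decide) (by decide) (by decide) (by decide) (by decide)
    have q6 := hconf {3,6} {0,1} _ hD (by decide) (by decide) (by decide) (by decide) (by decide)
    have q7 := hconf {0,1} {3,4} _ hD (by decide) (by decide) (by decide) (by decide) (by decide)
    have r3 := hconf {2,5} {0,7} _ hC (by decide) (by decide) (by decide) (by decide) (by decide)
    have r4 := hconf {2,5} {3,7} _ hC (by decide) (by decide) (by decide) (by decide) (by decide)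
    have r5 := hconf {0,7} {3,5} _ hC (by decide) (by decide) (by decide) (by decide) (by decide)
    have r6 := hconf {3,7} {0,2} _ hC (by decide) (by decide) (by decide) (by decide) (by decide)
    have r7 := hconf {0,2} {3,5} _ hC (by decide) (by decide) (by decide) (by decide) (by decide)
    have s1 := hc2 {1,5} (by decide)
    have s2 := hc2 {2,4} (by decide)
    omega
  · push Not at hdbl
    by_cases hhv : ∃ e ∈ Heavy, 1 ≤ c e
    · obtain ⟨e, he, hce⟩ := hhv
      have heP : e ∈ P := (show ∀ m ∈ Heavy, m ∈ P by decide +kernel) e he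
      have hh := half K e (cardP2 e heP) h3 (F3 e heP hce)
      have h30 := cnt_heavy e he
      have hle : (K.filter (fun T => ¬ Disjoint T e)).card ≤ 30 := by
        rw [← h30]
        apply Finset.card_le_card
        intro T hT
        obtain ⟨hT1, hT2⟩ := Finset.mem_filter.1 hT
        exact Finset.mem_filter.2 ⟨hKp T hT1, hbad T hT1, hT2⟩
      have hs := hsplit e
      have h16 : ∑ e ∈ P, c e ≤ P.card • 1 :=
        Finset.sum_le_card_nsmul _ _ _ (fun e he => by have := hdbl e he; omega)
      have : P.card = 16 := by decide +kernel
      rw [this] at h16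
      simp only [smul_eq_mul] at h16
      omega
    · push Not at hhv
      have h48 : K.card ≤ 48 := by
        rw [← cnt_all]
        apply Finset.card_le_card
        intro T hT
        exact Finset.mem_filter.2 ⟨hKp T hT, hbad T hT⟩
      have h8 : ∑ e ∈ P, c e ≤ ∑ e ∈ P, (if e ∈ Heavy then 0 else 1) := by
        apply Finset.sum_le_sum
        intro e he
        split_ifs with h
        · have := hhv e h; omega
        · have := hdbl e he; omega
      have : ∑ e ∈ P, (if e ∈ Heavy then 0 else 1) = 8 := by decide +kernel
      omega

/-- main lemma for a labelled configuration -/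
theorem labelled (n : ℕ) (H : Finset (Finset ℕ)) (hH : H ⊆ (Finset.range n).powersetCard 3)
    (hno : ∀ E F G : Finset ℕ, E ∈ H → F ∈ H → G ∈ H → Disjoint E F → Disjoint E G →
      Disjoint F G → False)
    (hr : ∀ T : Finset ℕ, T.card ≤ 2 →
      ∃ E ∈ H, ∃ F ∈ H, Disjoint E F ∧ Disjoint E T ∧ Disjoint F T)
    (V : Fin 8 ↪ ℕ)
    (hA : ({0,1,2} : Finset (Fin 8)).map V ∈ H) (hB : ({3,4,5} : Finset (Fin 8)).map V ∈ H)
    (hC : ({1,4,6} : Finset (Fin 8)).map V ∈ H) (hD : ({2,5,7} : Finset (Fin 8)).map V ∈ H)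
    (hsA : ∀ F ∈ H, Disjoint F (({0,1,2} : Finset (Fin 8)).map V) → V 3 ∈ F)
    (hsB : ∀ F ∈ H, Disjoint F (({3,4,5} : Finset (Fin 8)).map V) → V 0 ∈ F) :
    H.card ≤ 56 := by
  classical
  set K : Finset (Finset (Fin 8)) :=
    (Finset.powersetCard 3 Finset.univ).filter (fun T => T.map V ∈ H) with hKdef
  set N : Finset (Fin 8) → Finset ℕ := fun e =>
    (Finset.range n).filter (fun z => z ∉ Finset.univ.map V ∧ insert z (e.map V) ∈ H) with hN
  have memK : ∀ T, T ∈ K ↔ T.card = 3 ∧ T.map V ∈ H := by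
    intro T; simp [hKdef, Finset.mem_powersetCard]
  have memN : ∀ e z, z ∈ N e → z ∉ Finset.univ.map V ∧ insert z (e.map V) ∈ H := by
    intro e z hz
    exact (Finset.mem_filter.1 hz).2
  have h3H : ∀ F ∈ H, F.card = 3 := fun F hF => (Finset.mem_powersetCard.1 (hH hF)).2
  -- trace of an edge
  have trace : ∀ F ∈ H, ∃ S : Finset (Fin 8), (∀ i, i ∈ S ↔ V i ∈ F) ∧
      ((S.card = 3 ∧ ¬ Bad S ∧ F = S.map V) ∨
        (S ∈ P ∧ ∃ z ∈ N S, F = insert z (S.map V))) := by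
    intro F hF
    refine ⟨Finset.univ.filter (fun i => V i ∈ F), by simp, ?_⟩
    set S := Finset.univ.filter (fun i => V i ∈ F) with hS
    have mS : ∀ i, i ∈ S ↔ V i ∈ F := by simp [hS]
    have hsub : S.map V ⊆ F := by
      intro v hv
      obtain ⟨i, hi, rfl⟩ := Finset.mem_map.1 hv
      exact (mS i).1 hi
    have hcard : S.card ≤ 3 := by
      rw [← h3H F hF, ← Finset.card_map V]; exact Finset.card_le_card hsub
    have hdisj : ∀ T : Finset (Fin 8), Disjoint S T ↔ Disjoint F (T.map V) := by
      intro T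
      rw [Finset.disjoint_right, Finset.disjoint_right]
      simp [mS]
    have d0 : ∀ T U : Finset (Fin 8), Disjoint T U → Disjoint (T.map V) (U.map V) := fun T U h =>
      (Finset.disjoint_map V).2 h
    have hcl := classify S hcard
      (by
        intro h
        refine hno F _ _ hF hA hB ((hdisj _).1 ?_) ((hdisj _).1 ?_) (d0 _ _ (by decide))
        · exact h.mono_right (by decide)
        · exact h.mono_right (by decide))
      (by
        intro h
        refine hno F _ _ hF hC hD ((hdisj _).1 ?_) ((hdisj _).1 ?_) (d0 _ _ (by decide))
        · exact h.mono_right (by decide)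
        · exact h.mono_right (by decide))
      (fun h => (mS 3).2 (hsA F hF ((hdisj _).1 h)))
      (fun h => (mS 0).2 (hsB F hF ((hdisj _).1 h)))
    rcases hcl with ⟨h1, h2⟩ | h
    · left
      refine ⟨h1, h2, (Finset.eq_of_subset_of_card_le hsub ?_).symm⟩
      rw [Finset.card_map, h1, h3H F hF]
    · right
      refine ⟨h, ?_⟩
      have hc1 : (F \ S.map V).card = 1 := by
        rw [Finset.card_sdiff_of_subset hsub, Finset.card_map, cardP2 S h, h3H F hF]
      obtain ⟨z, hz⟩ := Finset.card_eq_one.1 hc1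
      have hzm : z ∈ F \ S.map V := by rw [hz]; simp
      rw [Finset.mem_sdiff] at hzm
      have hFe : F = insert z (S.map V) := by
        rw [Finset.insert_eq, ← hz, Finset.sdiff_union_of_subset hsub]
      refine ⟨z, Finset.mem_filter.2 ⟨(Finset.mem_powersetCard.1 (hH hF)).1 hzm.1, ?_, ?_⟩, hFe⟩
      · intro hv
        obtain ⟨i, _, rfl⟩ := Finset.mem_map.1 hv
        exact hzm.2 (Finset.mem_map_of_mem V ((mS i).2 hzm.1))
      · rw [← hFe]; exact hF
  -- at most one outside vertex
  have out1 : ∀ F ∈ H, ∀ z z', z ∈ F → z' ∈ F → z ∉ Finset.univ.map V → z' ∉ Finset.univ.map V →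
      z = z' := by
    intro F hF z z' hz hz' h h'
    have sub : ∀ S : Finset (Fin 8), ∀ u, u ∈ S.map V → u ∈ Finset.univ.map V := fun S u hu =>
      Finset.map_subset_map.2 (Finset.subset_univ S) hu
    obtain ⟨S, -, ⟨-, -, rfl⟩ | ⟨-, t, -, rfl⟩⟩ := trace F hF
    · exact absurd (sub _ _ hz) h
    · rcases Finset.mem_insert.1 hz with rfl | hz
      · rcases Finset.mem_insert.1 hz' with rfl | hz'
        · rfl
        · exact absurd (sub _ _ hz') h'
      · exact absurd (sub _ _ hz) h
  -- disjointness helpers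
  have dm : ∀ T U : Finset (Fin 8), Disjoint T U → Disjoint (T.map V) (U.map V) := fun T U h =>
      (Finset.disjoint_map V).2 h
  have nm : ∀ (S : Finset (Fin 8)) z, z ∉ Finset.univ.map V → z ∉ S.map V := fun S z h hu =>
      h (Finset.map_subset_map.2 (Finset.subset_univ S) hu)
  have di : ∀ (T U : Finset (Fin 8)) z, z ∉ Finset.univ.map V → Disjoint T U →
      Disjoint (T.map V) (insert z (U.map V)) := fun T U z hz h =>
    Finset.disjoint_insert_right.2 ⟨nm _ _ hz, dm _ _ h⟩
  have dii : ∀ (T U : Finset (Fin 8)) z z', z ∉ Finset.univ.map V → z' ∉ Finset.univ.map V →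
      z ≠ z' → Disjoint T U →
      Disjoint (insert z (T.map V)) (insert z' (U.map V)) := by
    intro T U z z' hz hz' hne h
    rw [Finset.disjoint_insert_left]
    refine ⟨?_, di _ _ _ hz' h⟩
    rw [Finset.mem_insert, not_or]
    exact ⟨hne, nm _ _ hz⟩
  have F4' : ∀ e f z z', z ∈ N e → z' ∈ N f → z ≠ z' → Disjoint e f → ∀ T ∈ K, Disjoint T e →
      ¬ Disjoint T f := by
    intro e f z z' hz hz' hne hef T hT h1 h2
    obtain ⟨a1, a2⟩ := memN _ _ hz
    obtain ⟨b1, b2⟩ := memN _ _ hz'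
    exact hno _ _ _ ((memK T).1 hT).2 a2 b2 (di _ _ _ a1 h1) (di _ _ _ b1 h2)
      (dii _ _ _ _ a1 b1 hne hef)
  -- resilience at a pair
  have cov : ∀ e ∈ P, ∃ E ∈ H, ∃ F ∈ H, Disjoint E F ∧ Disjoint E (e.map V) ∧
      Disjoint F (e.map V) ∧ ∀ z ∈ N e, z ∈ E ∨ z ∈ F := by
    intro e he
    obtain ⟨E, hE, F, hF, h1, h2, h3⟩ := hr (e.map V) (by rw [Finset.card_map, cardP2 e he])
    refine ⟨E, hE, F, hF, h1, h2, h3, ?_⟩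
    intro z hz
    by_contra hcon
    rw [not_or] at hcon
    exact hno E F _ hE hF (memN _ _ hz).2 h1 (Finset.disjoint_insert_right.2 ⟨hcon.1, h2⟩)
      (Finset.disjoint_insert_right.2 ⟨hcon.2, h3⟩)
  have hcore := core K (fun e => (N e).card) (fun T hT => ((memK T).1 hT).1)
    (by
      intro T hT hb
      obtain ⟨h1, h2⟩ := (memK T).1 hT
      obtain ⟨S, hS, ⟨-, h, h'⟩ | ⟨-, z, hz, h'⟩⟩ := trace _ h2
      · rw [Finset.map_inj] at h'
        exact h (h' ▸ hb)
      · have : z ∈ T.map V := by rw [h']; simp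
        exact nm _ _ (memN _ _ hz).1 this)
    ((memK _).2 ⟨by decide, hC⟩) ((memK _).2 ⟨by decide, hD⟩)
    (by
      intro e he
      obtain ⟨E, hE, F, hF, -, -, -, h⟩ := cov e he
      by_contra hlt
      obtain ⟨x, y, z, hx, hy, hz, hxy, hxz, hyz⟩ := Finset.two_lt_card_iff.1 (not_le.1 hlt)
      have ox := (memN _ _ hx).1
      have oy := (memN _ _ hy).1
      have oz := (memN _ _ hz).1
      rcases h x hx with h1 | h1 <;> rcases h y hy with h2 | h2 <;> rcases h z hz with h3 | h3 <;>
      first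
      | exact hxy (out1 E hE _ _ h1 h2 ox oy)
      | exact hxy (out1 F hF _ _ h1 h2 ox oy)
      | exact hxz (out1 E hE _ _ h1 h3 ox oz)
      | exact hxz (out1 F hF _ _ h1 h3 ox oz)
      | exact hyz (out1 E hE _ _ h2 h3 oy oz)
      | exact hyz (out1 F hF _ _ h2 h3 oy oz))
    (by
      intro e he hc T hT T' hT' h1 h2 h3
      obtain ⟨z, hz⟩ := Finset.card_pos.1 hc
      obtain ⟨a1, a2⟩ := memN _ _ hz
      exact hno _ _ _ ((memK T).1 hT).2 ((memK T').1 hT').2 a2 (dm _ _ h3) (di _ _ _ a1 h1)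
        (di _ _ _ a1 h2))
    (by
      intro e f he hf
      obtain ⟨z', hz'⟩ := Finset.card_pos.1 hf
      obtain ⟨z, hz, hne⟩ := Finset.exists_mem_ne (show 1 < (N e).card from he) z'
      exact F4' e f z z' hz hz' hne)
    (by
      intro e he hc
      obtain ⟨x, hx, y, hy, hxy⟩ := Finset.one_lt_card.1 (show 1 < (N e).card from hc)
      have ox := (memN _ _ hx).1
      have oy := (memN _ _ hy).1
      have main : ∀ E F : Finset ℕ, E ∈ H → F ∈ H → Disjoint E F → Disjoint E (e.map V) →
          Disjoint F (e.map V) → x ∈ E → y ∈ F → 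
          ∃ f g, f ∈ P ∧ g ∈ P ∧ 1 ≤ (N f).card ∧ 1 ≤ (N g).card ∧ Disjoint e f ∧
            Disjoint e g ∧ Disjoint f g ∧ ∀ T ∈ K, Disjoint T f → ¬ Disjoint T g := by
        intro E F hE hF hEF hEe hFe hxE hyF
        have one : ∀ G : Finset ℕ, G ∈ H → Disjoint G (e.map V) → ∀ u, u ∈ G →
            u ∉ Finset.univ.map V → ∃ f ∈ P, (∀ i ∈ f, V i ∈ G) ∧ Disjoint e f ∧ u ∈ N f := by
          intro G hG hGe u hu ou
          obtain ⟨S, hS, ⟨-, -, h'⟩ | ⟨hP, z, hz, h'⟩⟩ := trace G hG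
          · rw [h'] at hu
            exact absurd hu (nm _ _ ou)
          · have huz : u = z := out1 G hG u z hu (by rw [h']; simp) ou (memN _ _ hz).1
            refine ⟨S, hP, fun i hi => (hS i).1 hi, ?_, huz ▸ hz⟩
            rw [Finset.disjoint_left]
            intro i hi hiS
            exact Finset.disjoint_left.1 hGe ((hS i).1 hiS) (Finset.mem_map_of_mem V hi)
        obtain ⟨f, hf, f1, f2, f3⟩ := one E hE hEe x hxE ox
        obtain ⟨g, hg, g1, g2, g3⟩ := one F hF hFe y hyF oy
        have hfg : Disjoint f g := by
          rw [Finset.disjoint_left]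
          intro i hi hi'
          exact Finset.disjoint_left.1 hEF (f1 i hi) (g1 i hi')
        exact ⟨f, g, hf, hg, Finset.card_pos.2 ⟨_, f3⟩, Finset.card_pos.2 ⟨_, g3⟩, f2, g2, hfg,
          F4' f g x y f3 g3 hxy hfg⟩
      obtain ⟨E, hE, F, hF, h1, h2, h3, h⟩ := cov e he
      rcases h x hx with hx' | hx' <;> rcases h y hy with hy' | hy'
      · exact absurd (out1 E hE _ _ hx' hy' ox oy) hxy
      · exact main E F hE hF h1 h2 h3 hx' hy'
      · exact main F E hF hE h1.symm h3 h2 hx' hy'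
      · exact absurd (out1 F hF _ _ hx' hy' ox oy) hxy)
  have hcover : H ⊆ K.image (fun T => T.map V) ∪
      P.biUnion (fun e => (N e).image (fun z => insert z (e.map V))) := by
    intro F hF
    obtain ⟨S, -, ⟨h1, -, h2⟩ | ⟨h1, z, hz, h2⟩⟩ := trace F hF
    · exact Finset.mem_union_left _ (Finset.mem_image.2 ⟨S, (memK S).2 ⟨h1, h2 ▸ hF⟩, h2.symm⟩)
    · exact Finset.mem_union_right _ (Finset.mem_biUnion.2 ⟨S, h1,
        Finset.mem_image.2 ⟨z, hz, h2.symm⟩⟩)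
  calc H.card ≤ _ := Finset.card_le_card hcover
    _ ≤ _ := Finset.card_union_le _ _
    _ ≤ K.card + ∑ e ∈ P, (N e).card := by
        refine Nat.add_le_add Finset.card_image_le (Finset.card_biUnion_le.trans ?_)
        exact Finset.sum_le_sum (fun e _ => Finset.card_image_le)
    _ ≤ 56 := hcore

theorem third (F : Finset ℕ) (h : F.card = 3) (p q : ℕ) (hp : p ∈ F) (hq : q ∈ F) (hne : p ≠ q) :
    ∃ r, r ≠ p ∧ r ≠ q ∧ F = {p, q, r} := by
  have h1 : ((F.erase p).erase q).card = 1 := by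
    rw [Finset.card_erase_of_mem (Finset.mem_erase.2 ⟨hne.symm, hq⟩), Finset.card_erase_of_mem hp, h]
  obtain ⟨r, hr⟩ := Finset.card_eq_one.1 h1
  have hm : r ∈ (F.erase p).erase q := by rw [hr]; simp
  simp only [Finset.mem_erase] at hm
  refine ⟨r, hm.2.1, hm.1, ?_⟩
  rw [← hr, Finset.insert_erase (Finset.mem_erase.2 ⟨hne.symm, hq⟩), Finset.insert_erase hp]

end S14

theorem stmt14 (n : ℕ) (H : Finset (Finset ℕ))
    (hH : H ⊆ (Finset.range n).powersetCard 3)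
    (hres : Resilient 2 H) (hν : matchingNumber H = 2)
    (A B : Finset ℕ) (hA : A ∈ H) (hB : B ∈ H) (hAB : Disjoint A B)
    (hstarA : ∃ a : ℕ, ∀ F ∈ H, Disjoint F A → a ∈ F)
    (hstarB : ∃ b : ℕ, ∀ F ∈ H, Disjoint F B → b ∈ F) :
    H.card ≤ 56 := by
  have h3 : ∀ F ∈ H, F.card = 3 := fun F hF => (Finset.mem_powersetCard.1 (hH hF)).2
  obtain ⟨b, hb⟩ := hstarA
  obtain ⟨a, ha⟩ := hstarB
  have hbB : b ∈ B := hb B hB hAB.symm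
  have haA : a ∈ A := ha A hA hAB
  obtain ⟨C, hC, D, hD, hCD, hCT, hDT⟩ := S14.res2 H hres hν {a, b} Finset.card_le_two
  have mt : ∀ F ∈ H, Disjoint F {a, b} → (a ∉ F ∧ b ∉ F) ∧ (∃ p ∈ F, p ∈ A) ∧ ∃ p ∈ F, p ∈ B := by
    intro F hF hd
    have hn : a ∉ F ∧ b ∉ F := by
      rw [Finset.disjoint_right] at hd
      exact ⟨hd (by simp), hd (by simp)⟩
    exact ⟨hn, Finset.not_disjoint_iff.1 (fun h => hn.2 (hb F hF h)),
      Finset.not_disjoint_iff.1 (fun h => hn.1 (ha F hF h))⟩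
  obtain ⟨⟨haC, hbC⟩, ⟨a1, ha1C, ha1A⟩, b1, hb1C, hb1B⟩ := mt C hC hCT
  obtain ⟨⟨haD, hbD⟩, ⟨a2, ha2D, ha2A⟩, b2, hb2D, hb2B⟩ := mt D hD hDT
  have nAB : ∀ p q, p ∈ A → q ∈ B → p ≠ q := by
    rintro p q hp hq rfl; exact Finset.disjoint_left.1 hAB hp hq
  have nCD : ∀ p q, p ∈ C → q ∈ D → p ≠ q := by
    rintro p q hp hq rfl; exact Finset.disjoint_left.1 hCD hp hq
  have naC : ∀ p, p ∈ C → a ≠ p := by rintro p hp rfl; exact haC hp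
  have nbC : ∀ p, p ∈ C → b ≠ p := by rintro p hp rfl; exact hbC hp
  have naD : ∀ p, p ∈ D → a ≠ p := by rintro p hp rfl; exact haD hp
  have nbD : ∀ p, p ∈ D → b ≠ p := by rintro p hp rfl; exact hbD hp
  obtain ⟨x, hx1, hx2, hCe⟩ := S14.third C (h3 C hC) a1 b1 ha1C hb1C (nAB _ _ ha1A hb1B)
  obtain ⟨y, hy1, hy2, hDe⟩ := S14.third D (h3 D hD) a2 b2 ha2D hb2D (nAB _ _ ha2A hb2B)
  obtain ⟨a2', h1, h2, hAe⟩ := S14.third A (h3 A hA) a a1 haA ha1A (naC _ ha1C)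
  have e1 : a2' = a2 := by
    have := ha2A
    rw [hAe] at this
    simp only [Finset.mem_insert, Finset.mem_singleton] at this
    rcases this with h | h | h
    · exact absurd h.symm (naD _ ha2D)
    · exact absurd h.symm (nCD _ _ ha1C ha2D)
    · exact h.symm
  subst e1
  obtain ⟨b2', h3', h4, hBe⟩ := S14.third B (h3 B hB) b b1 hbB hb1B (nbC _ hb1C)
  have e2 : b2' = b2 := by
    have := hb2B
    rw [hBe] at this
    simp only [Finset.mem_insert, Finset.mem_singleton] at this
    rcases this with h | h | h
    · exact absurd h.symm (nbD _ hb2D)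
    · exact absurd h.symm (nCD _ _ hb1C hb2D)
    · exact h.symm
  subst e2
  have hxC : x ∈ C := by rw [hCe]; simp
  have hyD : y ∈ D := by rw [hDe]; simp
  have hinj : Function.Injective ![a, a1, a2', b, b1, b2', x, y] := by
    have k1 := naC _ ha1C
    have k2 := naC _ hxC
    have k3 := nbC _ hb1C
    have k4 := nbC _ hxC
    have k5 := naD _ hyD
    have k6 := nbD _ hyD
    have k7 := nCD _ _ ha1C ha2D
    have k8 := nCD _ _ ha1C hyD
    have k9 := nCD _ _ hb1C hb2D
    have k10 := nCD _ _ hb1C hyD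
    have k11 := nCD _ _ hxC ha2D
    have k12 := nCD _ _ hxC hb2D
    have k13 := nCD _ _ hxC hyD
    have l1 := nAB _ _ haA hbB
    have l2 := nAB _ _ haA hb1B
    have l3 := nAB _ _ haA hb2B
    have l4 := nAB _ _ ha1A hbB
    have l5 := nAB _ _ ha1A hb1B
    have l6 := nAB _ _ ha1A hb2B
    have l7 := nAB _ _ ha2A hbB
    have l8 := nAB _ _ ha2A hb1B
    have l9 := nAB _ _ ha2A hb2B
    have hnd : [a, a1, a2', b, b1, b2', x, y].Nodup := by
      simp only [List.nodup_cons, List.mem_cons, List.not_mem_nil, or_false, not_or,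
        not_false_eq_true, List.nodup_nil, and_true]
      and_intros <;> first | assumption | (apply Ne.symm; assumption)
    have hnd' : (List.ofFn ![a, a1, a2', b, b1, b2', x, y]).Nodup := hnd
    exact List.nodup_ofFn.1 hnd'
  have m1 : ({0,1,2} : Finset (Fin 8)).map ⟨_, hinj⟩ = A := by rw [hAe]; simp [Finset.map_insert]
  have m2 : ({3,4,5} : Finset (Fin 8)).map ⟨_, hinj⟩ = B := by rw [hBe]; simp [Finset.map_insert]
  have m3 : ({1,4,6} : Finset (Fin 8)).map ⟨_, hinj⟩ = C := by rw [hCe]; simp [Finset.map_insert]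
  have m4 : ({2,5,7} : Finset (Fin 8)).map ⟨_, hinj⟩ = D := by rw [hDe]; simp [Finset.map_insert]
  apply S14.labelled n H hH (fun E F G => S14.no3 H h3 hν E F G) (fun T => S14.res2 H hres hν T)
    ⟨_, hinj⟩
  · rwa [m1]
  · rwa [m2]
  · rwa [m3]
  · rwa [m4]
  · rw [m1]; exact hb
  · rw [m2]; exact ha
end
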